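/- Fix integers m > n ≥ 1 and a real γ ≥ 1. There exists a constant C̃ ≥ 1 depending only on m, n and γ such that for every nonempty closed set Z ⊊ ℝ^m there is an m-dimensional simplicial complex Σ with Σ^{(m)} = ℝ^m ∖ Z satisfying the Whitney triangulation conclusions, for which the following holds: for every metric space Y that is Lipschitz (n−1)-connected with constant γ, every L ≥ 0 and every L-Lipschitz map f : Z → Y, there is an extension f̃ : Z ∪ Σ^{(n)} → Y of f such that (1) f̃ is L·C̃-Lipschitz on every n-simplex of Σ, and (2) for every vertex a ∈ Σ^{(0)}, f̃(a) = f(z_a) for some point z_a ∈ Z with |z_a − a| = dist(a, Z). -/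

import Mathlib

open MeasureTheory Metric Set
noncomputable section

/-- `Euc d` is `ℝ^d` with the Euclidean metric. -/
abbrev Euc (d : ℕ) := EuclideanSpace ℝ (Fin d)

/-- The `k`-skeleton (as a subset of `ℝ^m`) of a simplicial complex: the union of all of
its `k`-simplices (faces with `k+1` vertices). -/
def skel (m : ℕ) (K : Geometry.SimplicialComplex ℝ (Euc m)) (k : ℕ) : Set (Euc m) :=
  ⋃ s ∈ {s ∈ K.faces | s.card = k + 1}, convexHull ℝ (s : Set (Euc m))

/-- The diameter of the simplex spanned by the vertex set `s`. -/
def simpDiam (m : ℕ) (s : Finset (Euc m)) : ℝ :=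
  Metric.diam (convexHull ℝ (s : Set (Euc m)))

/-- The distance between two subsets of `ℝ^m`. -/
def setDist (m : ℕ) (A B : Set (Euc m)) : ℝ :=
  sInf (Set.image2 dist A B)

/-- `β(ω)` for the simplex with vertex set `ω`: the minimum distance from the barycenter
of `ω` to an affine plane spanned by a face of codimension one. -/
def faceBetaMin (m : ℕ) (ω : Finset (Euc m)) : ℝ :=
  sInf { d | ∃ t ⊆ ω, t.card = ω.card - 1 ∧
    d = Metric.infDist (ω.centroid ℝ id)
          ((affineSpan ℝ (t : Set (Euc m)) : AffineSubspace ℝ (Euc m)) : Set (Euc m)) }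

/-- `B(ω)` for the simplex with vertex set `ω`: the maximum distance from the barycenter
of `ω` to an affine plane spanned by a face of codimension one. -/
def faceBetaMax (m : ℕ) (ω : Finset (Euc m)) : ℝ :=
  sSup { d | ∃ t ⊆ ω, t.card = ω.card - 1 ∧
    d = Metric.infDist (ω.centroid ℝ id)
          ((affineSpan ℝ (t : Set (Euc m)) : AffineSubspace ℝ (Euc m)) : Set (Euc m)) }

/-- `β_σ`: the minimum of `β(ω)` over all faces `ω` of `σ` of dimension `≥ 1`. -/
def betaLow (m : ℕ) (σ : Finset (Euc m)) : ℝ :=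
  sInf { b | ∃ ω ⊆ σ, 2 ≤ ω.card ∧ b = faceBetaMin m ω }

/-- `B_σ`: the maximum of `B(ω)` over all faces `ω` of `σ` of dimension `≥ 1`. -/
def betaHigh (m : ℕ) (σ : Finset (Euc m)) : ℝ :=
  sSup { b | ∃ ω ⊆ σ, 2 ≤ ω.card ∧ b = faceBetaMax m ω }

/-- The conclusions of the Whitney triangulation lemma for the closed set `Z ⊂ ℝ^m`:
`K` is an `m`-dimensional simplicial complex whose `m`-skeleton is `ℝ^m ∖ Z`, all of
whose `m`-simplices `σ` satisfy `diam σ ≤ dist(σ,Z) ≤ 12√m diam σ` and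
`D₁ < diam σ / B_σ ≤ diam σ / β_σ < D₂`. -/
def WhitneyConclusions (m : ℕ) (D₁ D₂ : ℝ) (Z : Set (Euc m))
    (K : Geometry.SimplicialComplex ℝ (Euc m)) : Prop :=
  (∀ s ∈ K.faces, s.card ≤ m + 1) ∧
  skel m K m = Zᶜ ∧
  ∀ σ ∈ K.faces, σ.card = m + 1 →
    simpDiam m σ ≤ setDist m (convexHull ℝ (σ : Set (Euc m))) Z ∧
    setDist m (convexHull ℝ (σ : Set (Euc m))) Z ≤ 12 * Real.sqrt m * simpDiam m σ ∧
    D₁ < simpDiam m σ / betaHigh m σ ∧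
    simpDiam m σ / betaHigh m σ ≤ simpDiam m σ / betaLow m σ ∧
    simpDiam m σ / betaLow m σ < D₂

/-- A metric space `Y` is Lipschitz `(n−1)`-connected with constant `c ≥ 1`:
for `k = 0, 1, …, n−1`, every `L`-Lipschitz map from the unit sphere `S^k ⊂ ℝ^{k+1}`
into `Y` extends to a `cL`-Lipschitz map on the closed unit ball `B^{k+1}`. -/
def LipschitzConnected (n : ℕ) (c : ℝ) (Y : Type) [MetricSpace Y] : Prop :=
  ∀ k : ℕ, k < n → ∀ L : ℝ, 0 ≤ L →
    ∀ f : Euc (k+1) → Y,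
      (∀ x ∈ Metric.sphere (0 : Euc (k+1)) 1, ∀ y ∈ Metric.sphere (0 : Euc (k+1)) 1,
        dist (f x) (f y) ≤ L * dist x y) →
      ∃ F : Euc (k+1) → Y,
        (∀ x ∈ Metric.closedBall (0 : Euc (k+1)) 1,
          ∀ y ∈ Metric.closedBall (0 : Euc (k+1)) 1,
            dist (F x) (F y) ≤ c * L * dist x y) ∧
        ∀ x ∈ Metric.sphere (0 : Euc (k+1)) 1, F x = f x

/-!
Cover the complement of `Z` by cells of the dyadic grids whose edges are comparable to the distance
to `Z`. Assigning to each point the coarsest scale at which its relatively open grid cell is far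
enough from `Z` makes the scale of a face at least as fine as, and at most one step finer than, that
of the cell. Hence the chains of cells ordered by inclusion span a barycentric subdivision, which
triangulates the complement even where the scale jumps. Its simplices are uniformly fat: the
barycenter of a cell differs by half an edge, in some coordinate direction, from every smaller cell
in the chain.

Send each vertex `a` to `f z`, where `z` is a point of `Z` nearest to `a`. Along an edge the
distance of the nearest points is controlled by the length of the edge, because both are comparable
to the distance to `Z`. Fatness makes every `(k + 1)`-simplex bilipschitz, up to scaling, to the
unit ball in dimension `k + 1`, so Lipschitz connectedness extends the map from the `k`-skeleton to
the `(k + 1)`-skeleton with a controlled loss in the Lipschitz constant.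
-/

/-! ### Dyadic cells -/

section DyadicCells

theorem two_zpow_neg_add_one (k : ℤ) : (2 : ℝ) ^ (-(k + 1)) = 2 ^ (-k) / 2 := by
  rw [neg_add, zpow_add₀ two_ne_zero, zpow_neg_one, div_eq_mul_inv]

theorem norm_le_sqrt_card_mul {ι : Type*} [Fintype ι] {x : EuclideanSpace ℝ ι} {r : ℝ}
    (hr : 0 ≤ r) (h : ∀ i, |x i| ≤ r) : ‖x‖ ≤ √(Fintype.card ι) * r := by
  rw [EuclideanSpace.norm_eq, ← Real.sqrt_sq hr, ← Real.sqrt_mul (by positivity)]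
  refine Real.sqrt_le_sqrt ?_
  calc ∑ i, ‖x i‖ ^ 2 ≤ ∑ _i : ι, r ^ 2 :=
        Finset.sum_le_sum fun i _ ↦ pow_le_pow_left₀ (norm_nonneg _) (h i) 2
    _ = Fintype.card ι * r ^ 2 := by simp

theorem floor_eq_and_ceil_eq_add_one {l : ℤ} {t : ℝ} (h₁ : (l : ℝ) < t) (h₂ : t < l + 1) :
    ⌊t⌋ = l ∧ ⌈t⌉ = l + 1 :=
  ⟨Int.floor_eq_iff.2 ⟨h₁.le, h₂⟩, Int.ceil_eq_iff.2 ⟨by push_cast; linarith, by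
    push_cast; exact h₂.le⟩⟩

theorem ceil_eq_floor_of_mem_range {t : ℝ} (ht : t ∈ range ((↑) : ℤ → ℝ)) : ⌈t⌉ = ⌊t⌋ := by
  obtain ⟨z, rfl⟩ := ht
  simp

theorem eq_of_mem_Icc_floor_ceil {t u : ℝ} (ht : t ∈ range ((↑) : ℤ → ℝ))
    (hu : u ∈ Icc (⌊t⌋ : ℝ) ⌈t⌉) : u = t := by
  obtain ⟨z, rfl⟩ := ht
  simpa using hu

theorem floor_ceil_of_mem_Ioo_floor_ceil {t u : ℝ} (hu : u ∈ Ioo (⌊t⌋ : ℝ) ⌈t⌉) :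
    ⌊u⌋ = ⌊t⌋ ∧ ⌈u⌉ = ⌈t⌉ := by
  have ht : ⌈t⌉ = ⌊t⌋ + 1 := by
    refine (Int.ceil_eq_floor_add_one_iff_notMem t).2 fun ht ↦ ?_
    rw [ceil_eq_floor_of_mem_range ht, Ioo_self] at hu
    exact hu
  rw [ht] at hu ⊢
  exact floor_eq_and_ceil_eq_add_one hu.1 (by exact_mod_cast hu.2)

variable {m : ℕ} {j k : ℤ} {x y z : Euc m}

/-- The closed cell of the grid `2⁻ᵏℤᵐ` whose relative interior contains `x`: a cube of edge
`2⁻ᵏ` and of dimension the number of coordinates of `x` outside `2⁻ᵏℤ`. -/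
def dyadicCell (k : ℤ) (x : Euc m) : Set (Euc m) :=
  {y | ∀ i, y i * 2 ^ k ∈ Icc (⌊x i * 2 ^ k⌋ : ℝ) ⌈x i * 2 ^ k⌉}

open Classical in
/-- The coordinate directions in which the cell `dyadicCell k x` extends. -/
def freeCoords (k : ℤ) (x : Euc m) : Finset (Fin m) :=
  {i | x i * 2 ^ k ∉ range ((↑) : ℤ → ℝ)}

/-- The barycenter of `dyadicCell k x`. -/
def dyadicCenter (k : ℤ) (x : Euc m) : Euc m :=
  WithLp.toLp 2 fun i ↦ ((⌊x i * 2 ^ k⌋ + ⌈x i * 2 ^ k⌉ : ℝ) / 2) / 2 ^ k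

theorem mem_dyadicCell_self (k : ℤ) (x : Euc m) : x ∈ dyadicCell k x :=
  fun _ ↦ ⟨Int.floor_le _, Int.le_ceil _⟩

theorem dyadicCell_subset (h : y ∈ dyadicCell k x) : dyadicCell k y ⊆ dyadicCell k x :=
  fun _ hz i ↦ ⟨(Int.cast_le.2 (Int.le_floor.2 (h i).1)).trans (hz i).1,
    (hz i).2.trans (Int.cast_le.2 (Int.ceil_le.2 (h i).2))⟩

theorem dyadicCell_antitone (x : Euc m) : Antitone fun k ↦ dyadicCell k x := by
  refine antitone_int_of_succ_le fun k y hy i ↦ ?_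
  obtain ⟨hl, hu⟩ := hy i
  rw [zpow_add_one₀ two_ne_zero, ← mul_assoc, ← mul_assoc] at hl hu
  set t := x i * 2 ^ k
  have hfloor : 2 * ⌊t⌋ ≤ ⌊t * 2⌋ :=
    Int.le_floor.2 (by push_cast; linarith [Int.floor_le t])
  have hceil : ⌈t * 2⌉ ≤ 2 * ⌈t⌉ :=
    Int.ceil_le.2 (by push_cast; linarith [Int.le_ceil t])
  rify at hfloor hceil
  constructor <;> linarith

theorem convex_dyadicCell (k : ℤ) (x : Euc m) : Convex ℝ (dyadicCell k x) := by
  have h : dyadicCell k x = ⋂ i,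
      (fun y : Euc m ↦ y i * 2 ^ k) ⁻¹' Icc (⌊x i * 2 ^ k⌋ : ℝ) ⌈x i * 2 ^ k⌉ := by
    ext; simp [dyadicCell]
  rw [h]
  refine convex_iInter fun i ↦ (convex_Icc _ _).is_linear_preimage ⟨fun y z ↦ ?_, fun a y ↦ ?_⟩
  · simp [add_mul]
  · simp [mul_assoc]

theorem dyadicCell_eq_iff :
    dyadicCell k y = dyadicCell k x ↔ y ∈ dyadicCell k x ∧ x ∈ dyadicCell k y :=
  ⟨fun h ↦ ⟨h ▸ mem_dyadicCell_self k y, h ▸ mem_dyadicCell_self k x⟩,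
    fun h ↦ (dyadicCell_subset h.1).antisymm (dyadicCell_subset h.2)⟩

theorem dyadicCell_eq_iff_floor_ceil : dyadicCell k y = dyadicCell k x ↔
    ∀ i, ⌊y i * 2 ^ k⌋ = ⌊x i * 2 ^ k⌋ ∧ ⌈y i * 2 ^ k⌉ = ⌈x i * 2 ^ k⌉ := by
  refine ⟨fun h i ↦ ?_, fun h ↦ by simp only [dyadicCell, (h _).1, (h _).2]⟩
  obtain ⟨hy, hx⟩ := dyadicCell_eq_iff.1 h
  exact ⟨(Int.le_floor.2 (hx i).1).antisymm (Int.le_floor.2 (hy i).1),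
    (Int.ceil_le.2 (hy i).2).antisymm (Int.ceil_le.2 (hx i).2)⟩

theorem abs_sub_le_of_mem_dyadicCell (hy : y ∈ dyadicCell k x) (hz : z ∈ dyadicCell k x)
    (i : Fin m) : |y i - z i| ≤ 2 ^ (-k) := by
  have hwidth : (⌈x i * 2 ^ k⌉ : ℝ) ≤ ⌊x i * 2 ^ k⌋ + 1 := by
    exact_mod_cast Int.ceil_le_floor_add_one _
  have h2k : (0 : ℝ) < 2 ^ k := by positivity
  rw [zpow_neg, ← one_div, le_div_iff₀ h2k, ← abs_of_pos h2k, ← abs_mul, abs_le]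
  constructor <;> linarith [(hy i).1, (hy i).2, (hz i).1, (hz i).2]

theorem dist_le_of_mem_dyadicCell (hy : y ∈ dyadicCell k x) (hz : z ∈ dyadicCell k x) :
    dist y z ≤ √m * 2 ^ (-k) := by
  rw [dist_eq_norm]
  simpa using norm_le_sqrt_card_mul (x := y - z) (r := 2 ^ (-k)) (by positivity)
    (abs_sub_le_of_mem_dyadicCell hy hz)

theorem mem_freeCoords {i : Fin m} :
    i ∈ freeCoords k x ↔ x i * 2 ^ k ∉ range ((↑) : ℤ → ℝ) := by
  simp [freeCoords]

theorem freeCoords_mono (hjk : j ≤ k) (x : Euc m) : freeCoords k x ⊆ freeCoords j x := by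
  intro i hi
  rw [mem_freeCoords] at hi ⊢
  rintro ⟨z, hz⟩
  obtain ⟨n, rfl⟩ := Int.le.dest hjk
  exact hi ⟨z * 2 ^ n, by push_cast; rw [hz, zpow_add₀ two_ne_zero, zpow_natCast, mul_assoc]⟩

theorem apply_eq_of_mem_dyadicCell {i : Fin m} (hi : i ∉ freeCoords k x)
    (hy : y ∈ dyadicCell k x) : y i = x i := by
  rw [mem_freeCoords, not_not] at hi
  exact mul_right_cancel₀ (by positivity : (2 : ℝ) ^ k ≠ 0) (eq_of_mem_Icc_floor_ceil hi (hy i))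

theorem freeCoords_subset_of_mem_dyadicCell (hy : y ∈ dyadicCell k x) :
    freeCoords k y ⊆ freeCoords k x := by
  intro i hi
  by_contra hi'
  rw [mem_freeCoords, apply_eq_of_mem_dyadicCell hi' hy, ← mem_freeCoords] at hi
  exact hi' hi

theorem freeCoords_eq_of_dyadicCell_eq (h : dyadicCell k y = dyadicCell k x) :
    freeCoords k y = freeCoords k x :=
  (freeCoords_subset_of_mem_dyadicCell (dyadicCell_eq_iff.1 h).1).antisymm
    (freeCoords_subset_of_mem_dyadicCell (dyadicCell_eq_iff.1 h).2)

theorem exists_mem_freeCoords_of_dyadicCell_ne (hy : y ∈ dyadicCell k x)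
    (hne : dyadicCell k y ≠ dyadicCell k x) : ∃ i ∈ freeCoords k x, i ∉ freeCoords k y := by
  by_contra! h
  refine hne (dyadicCell_eq_iff_floor_ceil.2 fun i ↦ ?_)
  by_cases hi : i ∈ freeCoords k x
  · have hyi := h i hi
    rw [mem_freeCoords] at hyi
    refine floor_ceil_of_mem_Ioo_floor_ceil ⟨(hy i).1.lt_of_ne ?_, (hy i).2.lt_of_ne ?_⟩
    · exact fun h ↦ hyi ⟨_, h⟩
    · exact fun h ↦ hyi ⟨_, h.symm⟩
  · rw [apply_eq_of_mem_dyadicCell hi hy]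
    exact ⟨rfl, rfl⟩

theorem dyadicCenter_apply_mul (k : ℤ) (x : Euc m) (i : Fin m) :
    dyadicCenter k x i * 2 ^ k = (⌊x i * 2 ^ k⌋ + ⌈x i * 2 ^ k⌉) / 2 := by
  simp only [dyadicCenter]
  field_simp

theorem dyadicCenter_congr (h : dyadicCell k y = dyadicCell k x) :
    dyadicCenter k y = dyadicCenter k x := by
  ext i
  simp only [dyadicCenter, (dyadicCell_eq_iff_floor_ceil.1 h i).1,
    (dyadicCell_eq_iff_floor_ceil.1 h i).2]

theorem dyadicCell_dyadicCenter (k : ℤ) (x : Euc m) :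
    dyadicCell k (dyadicCenter k x) = dyadicCell k x := by
  refine dyadicCell_eq_iff_floor_ceil.2 fun i ↦ ?_
  rw [dyadicCenter_apply_mul]
  set t := x i * 2 ^ k
  by_cases ht : t ∈ range ((↑) : ℤ → ℝ)
  · obtain ⟨z, hz⟩ := ht
    simp [← hz]
  · refine floor_ceil_of_mem_Ioo_floor_ceil ?_
    rw [(Int.ceil_eq_floor_add_one_iff_notMem t).2 ht]
    push_cast
    constructor <;> linarith

theorem dyadicCell_lineMap {v : Euc m} (hv : dyadicCenter k v = v) (hy : y ∈ dyadicCell k v)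
    {θ : ℝ} (h₀ : 0 ≤ θ) (h₁ : θ < 1) :
    dyadicCell k (AffineMap.lineMap v y θ) = dyadicCell k v := by
  refine dyadicCell_eq_iff_floor_ceil.2 fun i ↦ ?_
  have hvi : v i * 2 ^ k = (⌊v i * 2 ^ k⌋ + ⌈v i * 2 ^ k⌉) / 2 := by
    rw [← dyadicCenter_apply_mul, hv]
  by_cases hi : i ∈ freeCoords k v
  · have hceil := (Int.ceil_eq_floor_add_one_iff_notMem _).2 (mem_freeCoords.1 hi)
    refine floor_ceil_of_mem_Ioo_floor_ceil ?_
    have hline : AffineMap.lineMap v y θ i * 2 ^ k =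
        v i * 2 ^ k + θ * (y i * 2 ^ k - v i * 2 ^ k) := by
      simp [AffineMap.lineMap_apply]; ring
    obtain ⟨hl, hu⟩ := hy i
    rw [hceil] at hu hvi ⊢
    push_cast at hu hvi ⊢
    rw [hline]
    constructor <;> nlinarith
  · simp [AffineMap.lineMap_apply, apply_eq_of_mem_dyadicCell hi hy]

theorem abs_sub_eq_of_mem_freeCoords {v w : Euc m} {i : Fin m} (hw : dyadicCenter k w = w)
    (hv : v ∈ dyadicCell k w) (hiw : i ∈ freeCoords k w) (hiv : i ∉ freeCoords k v) :
    |w i - v i| = 2 ^ (-k) / 2 := by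
  have hwi : w i * 2 ^ k = (⌊w i * 2 ^ k⌋ + ⌈w i * 2 ^ k⌉) / 2 := by
    rw [← dyadicCenter_apply_mul, hw]
  rw [mem_freeCoords, not_not] at hiv
  obtain ⟨z, hz⟩ := hiv
  obtain ⟨hl, hu⟩ := hv i
  rw [(Int.ceil_eq_floor_add_one_iff_notMem _).2 (mem_freeCoords.1 hiw)] at hwi hu
  rw [← hz] at hl hu
  have h2k : (0 : ℝ) < 2 ^ k := by positivity
  have hz' : z = ⌊w i * 2 ^ k⌋ ∨ z = ⌊w i * 2 ^ k⌋ + 1 := by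
    norm_cast at hl hu
    omega
  have habs : |w i - v i| * 2 ^ k = 1 / 2 := by
    rw [← abs_of_pos h2k, ← abs_mul, sub_mul, hwi, ← hz]
    rcases hz' with h | h <;> rw [h] <;> push_cast <;> ring_nf <;> norm_num
  rw [zpow_neg]
  field_simp
  linarith

end DyadicCells

/-! ### Whitney cells -/

section WhitneyCells

variable {m : ℕ} {Z : Set (Euc m)} {k : ℤ} {v w x y : Euc m}

/-- `2⁻ᵏ` is a small enough scale for the point `x`: some point of the cell of `x` is at distance
at least twice the maximal diameter `√m 2⁻ᵏ` of a cell from `Z`. Admissibility at one point rather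
than at all points of the cell makes the smallest admissible `k` monotone under passing
to a face. -/
def IsAdmissibleScale (Z : Set (Euc m)) (k : ℤ) (x : Euc m) : Prop :=
  ∃ y ∈ dyadicCell k x, 2 * √m * 2 ^ (-k) ≤ infDist y Z

/-- The exponent `k` of the coarsest scale `2⁻ᵏ` admissible for `x`; a junk value when
`infDist x Z = 0`. -/
def whitneyScale (Z : Set (Euc m)) (x : Euc m) : ℤ := sInf {k | IsAdmissibleScale Z k x}

/-- The closed Whitney cell whose relative interior contains `x`. -/
def whitneyCell (Z : Set (Euc m)) (x : Euc m) : Set (Euc m) := dyadicCell (whitneyScale Z x) x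

/-- The barycenter of `whitneyCell Z x`. -/
def whitneyCenter (Z : Set (Euc m)) (x : Euc m) : Euc m := dyadicCenter (whitneyScale Z x) x

/-- The barycenters of the Whitney cells of the complement of `closure Z`; they are the vertices
of the triangulation. -/
def whitneyVertices (Z : Set (Euc m)) : Set (Euc m) := {v | 0 < infDist v Z ∧ whitneyCenter Z v = v}

theorem pos_dim_of_infDist_pos (hx : 0 < infDist x Z) : 0 < m := by
  rcases m.eq_zero_or_pos with rfl | hm
  · rcases Z.eq_empty_or_nonempty with rfl | ⟨z, hz⟩
    · simp at hx
    · exact absurd (infDist_zero_of_mem (Subsingleton.elim z x ▸ hz)) hx.ne'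
  · exact hm

theorem IsAdmissibleScale.le_infDist (hx : IsAdmissibleScale Z k x) (hy : y ∈ dyadicCell k x) :
    √m * 2 ^ (-k) ≤ infDist y Z := by
  obtain ⟨z, hz, hzZ⟩ := hx
  linarith [infDist_le_infDist_add_dist (s := Z) (x := z) (y := y), dist_le_of_mem_dyadicCell hz hy]

theorem isAdmissibleScale_of_le_infDist (hx : 2 * √m * 2 ^ (-k) ≤ infDist x Z) :
    IsAdmissibleScale Z k x :=
  ⟨x, mem_dyadicCell_self k x, hx⟩

theorem IsAdmissibleScale.of_mem_dyadicCell (hy : IsAdmissibleScale Z k y)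
    (h : y ∈ dyadicCell k x) : IsAdmissibleScale Z k x :=
  hy.imp fun _ hz ↦ ⟨dyadicCell_subset h hz.1, hz.2⟩

theorem exists_isAdmissibleScale (hx : 0 < infDist x Z) : ∃ k, IsAdmissibleScale Z k x := by
  have hm := pos_dim_of_infDist_pos hx
  obtain ⟨p, hp, -⟩ := exists_mem_Ico_zpow
    (show 0 < infDist x Z / (2 * √m) by positivity) (one_lt_two (α := ℝ))
  refine ⟨-p, isAdmissibleScale_of_le_infDist ?_⟩
  rwa [neg_neg, mul_comm, ← le_div_iff₀ (by positivity)]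

theorem bddBelow_isAdmissibleScale (hx : 0 < infDist x Z) :
    BddBelow {k | IsAdmissibleScale Z k x} := by
  have hm := pos_dim_of_infDist_pos hx
  obtain ⟨p, -, hp⟩ := exists_mem_Ico_zpow
    (show 0 < infDist x Z / √m by positivity) (one_lt_two (α := ℝ))
  refine ⟨-p, fun k hk ↦ ?_⟩
  have hlt : (2 : ℝ) ^ (-k) < 2 ^ (p + 1) := by
    refine lt_of_le_of_lt ?_ hp
    rw [le_div_iff₀' (by positivity)]
    exact IsAdmissibleScale.le_infDist hk (mem_dyadicCell_self k x)
  have := (zpow_lt_zpow_iff_right₀ one_lt_two).1 hlt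
  omega

theorem isAdmissibleScale_whitneyScale (hx : 0 < infDist x Z) :
    IsAdmissibleScale Z (whitneyScale Z x) x :=
  Int.csInf_mem (exists_isAdmissibleScale hx) (bddBelow_isAdmissibleScale hx)

theorem whitneyScale_le (hx : 0 < infDist x Z) (h : IsAdmissibleScale Z k x) :
    whitneyScale Z x ≤ k :=
  csInf_le (bddBelow_isAdmissibleScale hx) h

theorem mem_whitneyCell_self (Z : Set (Euc m)) (x : Euc m) : x ∈ whitneyCell Z x :=
  mem_dyadicCell_self _ x

theorem convex_whitneyCell (Z : Set (Euc m)) (x : Euc m) : Convex ℝ (whitneyCell Z x) :=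
  convex_dyadicCell _ x

theorem le_infDist_of_mem_whitneyCell (hx : 0 < infDist x Z) (hy : y ∈ whitneyCell Z x) :
    √m * 2 ^ (-whitneyScale Z x) ≤ infDist y Z :=
  (isAdmissibleScale_whitneyScale hx).le_infDist hy

theorem infDist_lt_of_pos (hx : 0 < infDist x Z) :
    infDist x Z < 4 * √m * 2 ^ (-whitneyScale Z x) := by
  by_contra! hle
  have hpred := two_zpow_neg_add_one (whitneyScale Z x - 1)
  rw [sub_add_cancel] at hpred
  rw [hpred] at hle
  have := whitneyScale_le hx (k := whitneyScale Z x - 1)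
    (isAdmissibleScale_of_le_infDist (by linarith))
  omega

theorem infDist_pos_of_mem_whitneyCell (hx : 0 < infDist x Z) (hy : y ∈ whitneyCell Z x) :
    0 < infDist y Z := by
  have hm := pos_dim_of_infDist_pos hx
  exact lt_of_lt_of_le (by positivity) (le_infDist_of_mem_whitneyCell hx hy)

theorem whitneyScale_le_of_mem_whitneyCell (hx : 0 < infDist x Z) (hy : y ∈ whitneyCell Z x) :
    whitneyScale Z x ≤ whitneyScale Z y := by
  by_contra! hlt
  have hadm := isAdmissibleScale_whitneyScale (infDist_pos_of_mem_whitneyCell hx hy)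
  exact hlt.not_ge (whitneyScale_le hx (hadm.of_mem_dyadicCell (dyadicCell_antitone x hlt.le hy)))

theorem whitneyScale_le_add_one_of_mem_whitneyCell (hx : 0 < infDist x Z)
    (hy : y ∈ whitneyCell Z x) : whitneyScale Z y ≤ whitneyScale Z x + 1 := by
  refine whitneyScale_le (infDist_pos_of_mem_whitneyCell hx hy)
    (isAdmissibleScale_of_le_infDist ?_)
  rw [two_zpow_neg_add_one]
  linarith [le_infDist_of_mem_whitneyCell hx hy]

theorem two_zpow_neg_whitneyScale_le (hx : 0 < infDist x Z) (hy : y ∈ whitneyCell Z x) :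
    (2 : ℝ) ^ (-whitneyScale Z x) ≤ 2 * 2 ^ (-whitneyScale Z y) := by
  have hle : (2 : ℝ) ^ (-(whitneyScale Z x + 1)) ≤ 2 ^ (-whitneyScale Z y) :=
    zpow_le_zpow_right₀ one_le_two
      (neg_le_neg (whitneyScale_le_add_one_of_mem_whitneyCell hx hy))
  rw [two_zpow_neg_add_one] at hle
  linarith

theorem whitneyCell_subset (hx : 0 < infDist x Z) (hy : y ∈ whitneyCell Z x) :
    whitneyCell Z y ⊆ whitneyCell Z x :=
  (dyadicCell_antitone y (whitneyScale_le_of_mem_whitneyCell hx hy)).trans (dyadicCell_subset hy)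

theorem whitneyScale_congr (hx : 0 < infDist x Z)
    (h : dyadicCell (whitneyScale Z x) y = whitneyCell Z x) :
    whitneyScale Z y = whitneyScale Z x := by
  obtain ⟨hy, hx'⟩ := dyadicCell_eq_iff.1 h
  exact (whitneyScale_le (infDist_pos_of_mem_whitneyCell hx hy)
    ((isAdmissibleScale_whitneyScale hx).of_mem_dyadicCell hx')).antisymm
    (whitneyScale_le_of_mem_whitneyCell hx hy)

theorem whitneyCenter_congr (hx : 0 < infDist x Z)
    (h : dyadicCell (whitneyScale Z x) y = whitneyCell Z x) :
    whitneyCenter Z y = whitneyCenter Z x := by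
  rw [whitneyCenter, whitneyScale_congr hx h, dyadicCenter_congr h, whitneyCenter]

theorem whitneyCenter_mem_whitneyCell (Z : Set (Euc m)) (x : Euc m) :
    whitneyCenter Z x ∈ whitneyCell Z x :=
  (dyadicCell_eq_iff.1 (dyadicCell_dyadicCenter _ x)).1

theorem whitneyScale_whitneyCenter (hx : 0 < infDist x Z) :
    whitneyScale Z (whitneyCenter Z x) = whitneyScale Z x :=
  whitneyScale_congr hx (dyadicCell_dyadicCenter _ x)

theorem whitneyCell_whitneyCenter (hx : 0 < infDist x Z) :
    whitneyCell Z (whitneyCenter Z x) = whitneyCell Z x := by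
  rw [whitneyCell, whitneyScale_whitneyCenter hx]
  exact dyadicCell_dyadicCenter _ x

theorem whitneyCenter_mem_whitneyVertices (hx : 0 < infDist x Z) :
    whitneyCenter Z x ∈ whitneyVertices Z :=
  ⟨infDist_pos_of_mem_whitneyCell hx (whitneyCenter_mem_whitneyCell Z x),
    whitneyCenter_congr hx (dyadicCell_dyadicCenter _ x)⟩

theorem whitneyCenter_lineMap (hw : w ∈ whitneyVertices Z) (hy : y ∈ whitneyCell Z w) {θ : ℝ}
    (h₀ : 0 ≤ θ) (h₁ : θ < 1) : whitneyCenter Z (AffineMap.lineMap w y θ) = w :=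
  (whitneyCenter_congr hw.1 (dyadicCell_lineMap hw.2 hy h₀ h₁)).trans hw.2

/-- `v` lies on the boundary of the cell of `w`, so it is rigid in some direction in which `w` is
free: every point of the cell of `v` keeps the same positive distance to `w` in that direction. -/
theorem exists_coord_of_mem_whitneyCell (hv : v ∈ whitneyVertices Z) (hw : w ∈ whitneyVertices Z)
    (hvw : v ∈ whitneyCell Z w) (hne : v ≠ w) :
    ∃ i, |w i - v i| = 2 ^ (-whitneyScale Z w) / 2 ∧ ∀ u ∈ whitneyCell Z v, u i = v i := by
  have hcell : dyadicCell (whitneyScale Z w) v ≠ whitneyCell Z w := fun h ↦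
    hne (by rw [← hv.2, ← hw.2, whitneyCenter_congr hw.1 h])
  obtain ⟨i, hiw, hiv⟩ := exists_mem_freeCoords_of_dyadicCell_ne hvw hcell
  exact ⟨i, abs_sub_eq_of_mem_freeCoords hw.2 hvw hiw hiv, fun u hu ↦ apply_eq_of_mem_dyadicCell
    (fun h ↦ hiv (freeCoords_mono (whitneyScale_le_of_mem_whitneyCell hw.1 hvw) v h)) hu⟩

end WhitneyCells

/-! ### The triangulation -/

section Chains

theorem eq_or_exists_lineMap_of_mem_convexHull {E : Type*} [AddCommGroup E] [Module ℝ E]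
    {s : Set E} {w x : E} (hw : w ∈ s) (hx : x ∈ convexHull ℝ s) :
    x = w ∨ ∃ z ∈ convexHull ℝ (s \ {w}), ∃ θ ∈ Ioc (0 : ℝ) 1, AffineMap.lineMap w z θ = x := by
  rw [← insert_sdiff_self_of_mem hw] at hx
  rcases (s \ {w}).eq_empty_or_nonempty with he | hne
  · left
    simpa [he] using hx
  · rw [convexHull_insert hne, mem_convexJoin] at hx
    obtain ⟨_, rfl, z, hz, hx⟩ := hx
    rw [segment_eq_image_lineMap] at hx
    obtain ⟨θ, ⟨h₀, h₁⟩, rfl⟩ := hx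
    rcases h₀.eq_or_lt with rfl | h₀
    · simp
    · exact Or.inr ⟨z, hz, θ, ⟨h₀, h₁⟩, rfl⟩

variable {m : ℕ} {Z : Set (Euc m)} {s t : Finset (Euc m)} {v w x z z' : Euc m}

/-- A finite set of barycenters of Whitney cells totally ordered by inclusion of the cells; the
chains are the simplices of the barycentric subdivision of the Whitney cell decomposition. -/
structure IsWhitneyChain (Z : Set (Euc m)) (s : Finset (Euc m)) : Prop where
  mem_vertices : ∀ v ∈ s, v ∈ whitneyVertices Z
  total : ∀ v ∈ s, ∀ w ∈ s, v ∈ whitneyCell Z w ∨ w ∈ whitneyCell Z v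

/-- `w` is the vertex of `s` whose cell is the largest. -/
structure IsTopVertex (Z : Set (Euc m)) (s : Finset (Euc m)) (w : Euc m) : Prop where
  mem : w ∈ s
  mem_cell : ∀ v ∈ s, v ∈ whitneyCell Z w

theorem IsWhitneyChain.mono (hs : IsWhitneyChain Z s) (hts : t ⊆ s) : IsWhitneyChain Z t :=
  ⟨fun v hv ↦ hs.mem_vertices v (hts hv), fun v hv w hw ↦ hs.total v (hts hv) w (hts hw)⟩

theorem IsWhitneyChain.exists_isTopVertex (hs : IsWhitneyChain Z s) (hne : s.Nonempty) :
    ∃ w, IsTopVertex Z s w := by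
  classical
  obtain ⟨w, hw, hmax⟩ := s.exists_max_image (fun w ↦ {v ∈ s | v ∈ whitneyCell Z w}.card) hne
  refine ⟨w, hw, fun v hv ↦ ?_⟩
  by_contra hvw
  have hwv : w ∈ whitneyCell Z v := (hs.total v hv w hw).resolve_left hvw
  refine (hmax v hv).not_gt (Finset.card_lt_card ((Finset.ssubset_iff_of_subset ?_).2 ⟨v, ?_⟩))
  · exact Finset.monotone_filter_right s
      fun u _ hu ↦ whitneyCell_subset (hs.mem_vertices v hv).1 hwv hu
  · simp [hv, hvw, mem_whitneyCell_self]

theorem IsTopVertex.convexHull_subset (hw : IsTopVertex Z s w) :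
    convexHull ℝ (s : Set (Euc m)) ⊆ whitneyCell Z w :=
  convexHull_min hw.mem_cell (convex_whitneyCell Z w)

theorem IsWhitneyChain.infDist_pos (hs : IsWhitneyChain Z s)
    (hx : x ∈ convexHull ℝ (s : Set (Euc m))) : 0 < infDist x Z := by
  obtain ⟨w, hw⟩ :=
    hs.exists_isTopVertex (Finset.coe_nonempty.1 (convexHull_nonempty_iff.1 ⟨x, hx⟩))
  exact infDist_pos_of_mem_whitneyCell (hs.mem_vertices w hw.mem).1 (hw.convexHull_subset hx)

theorem IsWhitneyChain.exists_polar (hs : IsWhitneyChain Z s)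
    (hx : x ∈ convexHull ℝ (s : Set (Euc m))) :
    ∃ w ∈ s, whitneyCenter Z x = w ∧ (x = w ∨ ∃ t ⊆ s, w ∉ t ∧ ∃ z ∈ convexHull ℝ (t : Set (Euc m)),
      z ∈ whitneyCell Z w ∧ ∃ θ ∈ Ioo (0 : ℝ) 1, AffineMap.lineMap w z θ = x) := by
  classical
  induction s using Finset.strongInduction with
  | H s ih =>
    obtain ⟨w, hw⟩ :=
      hs.exists_isTopVertex (Finset.coe_nonempty.1 (convexHull_nonempty_iff.1 ⟨x, hx⟩))
    have hwV := hs.mem_vertices w hw.mem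
    rcases eq_or_exists_lineMap_of_mem_convexHull hw.mem hx with rfl | ⟨z, hz, θ, ⟨h₀, h₁⟩, hθ⟩
    · exact ⟨x, hw.mem, hwV.2, Or.inl rfl⟩
    rw [← Finset.coe_erase] at hz
    rcases h₁.eq_or_lt with rfl | h₁
    · obtain rfl : z = x := by simpa using hθ
      obtain ⟨u, hu, huz, hpolar⟩ := ih (s.erase w) (Finset.erase_ssubset hw.mem)
        (hs.mono (Finset.erase_subset w s)) hz
      exact ⟨u, Finset.mem_of_mem_erase hu, huz, hpolar.imp_right fun ⟨t, ht, h⟩ ↦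
        ⟨t, ht.trans (Finset.erase_subset w s), h⟩⟩
    · rw [← hθ]
      have hzw : z ∈ whitneyCell Z w := hw.convexHull_subset
        (convexHull_mono (Finset.coe_subset.2 (Finset.erase_subset w s)) hz)
      exact ⟨w, hw.mem, whitneyCenter_lineMap hwV hzw h₀.le h₁, Or.inr ⟨s.erase w,
        Finset.erase_subset w s, Finset.notMem_erase w s, z, hz, hzw, θ, ⟨h₀, h₁⟩, rfl⟩⟩

theorem IsWhitneyChain.whitneyCenter_mem (hs : IsWhitneyChain Z s)
    (hx : x ∈ convexHull ℝ (s : Set (Euc m))) : whitneyCenter Z x ∈ s := by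
  obtain ⟨w, hw, hxw, -⟩ := hs.exists_polar hx
  exact hxw ▸ hw

theorem eq_of_lineMap_eq_lineMap (hw : w ∈ whitneyVertices Z) (hz : z ∈ whitneyCell Z w)
    (hz' : z' ∈ whitneyCell Z w) (hzw : whitneyCenter Z z ≠ w) (hzw' : whitneyCenter Z z' ≠ w)
    {θ θ' : ℝ} (hθ : 0 < θ) (hθ' : 0 < θ')
    (h : AffineMap.lineMap w z θ = AffineMap.lineMap w z' θ') : z = z' := by
  wlog hle : θ ≤ θ' generalizing z z' θ θ'
  · exact (this hz' hz hzw' hzw hθ' hθ h.symm (le_of_not_ge hle)).symm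
  have hline : AffineMap.lineMap w z (θ / θ') = z' := by
    simp only [AffineMap.lineMap_apply, vsub_eq_sub, vadd_eq_add, add_left_inj] at h ⊢
    rw [div_eq_inv_mul, mul_smul, h, inv_smul_smul₀ hθ'.ne', sub_add_cancel]
  rcases hle.eq_or_lt with rfl | hlt
  · rwa [div_self hθ.ne', AffineMap.lineMap_apply_one] at hline
  · exact absurd (hline ▸ whitneyCenter_lineMap hw hz (by positivity) ((div_lt_one hθ').2 hlt)) hzw'

theorem IsWhitneyChain.mem_convexHull_inter (hs : IsWhitneyChain Z s) (ht : IsWhitneyChain Z t)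
    (hxs : x ∈ convexHull ℝ (s : Set (Euc m))) (hxt : x ∈ convexHull ℝ (t : Set (Euc m))) :
    x ∈ convexHull ℝ (s ∩ t : Set (Euc m)) := by
  induction s using Finset.strongInduction generalizing t x with
  | H s ih =>
    obtain ⟨w, hws, hxw, hpolar⟩ := hs.exists_polar hxs
    obtain ⟨w', hwt, hxw', hpolar'⟩ := ht.exists_polar hxt
    obtain rfl : w = w' := hxw.symm.trans hxw'
    have hw : w ∈ convexHull ℝ (s ∩ t : Set (Euc m)) := subset_convexHull ℝ _ ⟨hws, hwt⟩
    rcases hpolar with rfl | ⟨s₁, hs₁, hws₁, z, hz, hzw, θ, hθ, rfl⟩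
    · exact hw
    rcases hpolar' with heq | ⟨t₁, ht₁, hwt₁, z', hz', hzw', θ', hθ', heq⟩
    · rwa [heq]
    have hne : whitneyCenter Z z ≠ w := fun h ↦ hws₁ (h ▸ (hs.mono hs₁).whitneyCenter_mem hz)
    have hne' : whitneyCenter Z z' ≠ w := fun h ↦ hwt₁ (h ▸ (ht.mono ht₁).whitneyCenter_mem hz')
    obtain rfl := eq_of_lineMap_eq_lineMap (hs.mem_vertices w hws) hzw' hzw hne' hne hθ'.1 hθ.1 heq
    have hz₁ := ih s₁ (Finset.ssubset_iff_subset_ne.2 ⟨hs₁, fun h ↦ hws₁ (h ▸ hws)⟩)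
      (hs.mono hs₁) (ht.mono ht₁) hz hz'
    exact (convex_convexHull ℝ _).lineMap_mem hw
      (convexHull_mono (inter_subset_inter hs₁ ht₁) hz₁) ⟨hθ.1.le, hθ.2.le⟩

theorem IsWhitneyChain.abs_coeff_top_mul_le (hs : IsWhitneyChain Z s) (hw : IsTopVertex Z s w)
    {w' : Euc m} [DecidableEq (Euc m)] (hw' : IsTopVertex Z (s.erase w) w') {ν : Euc m → ℝ}
    (hν : ∑ v ∈ s, ν v = 0) : |ν w| * 2 ^ (-whitneyScale Z w) ≤ 2 * ‖∑ v ∈ s, ν v • v‖ := by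
  have hw's := Finset.mem_of_mem_erase hw'.mem
  obtain ⟨i, hwi, hconst⟩ := exists_coord_of_mem_whitneyCell (hs.mem_vertices w' hw's)
    (hs.mem_vertices w hw.mem) (hw.mem_cell w' hw's) (Finset.ne_of_mem_erase hw'.mem)
  have hcoord : (∑ v ∈ s, ν v • v) i = ν w * (w i - w' i) := calc
    (∑ v ∈ s, ν v • v) i = ∑ v ∈ s, ν v * (v i - w' i) := by
      simp [mul_sub, ← Finset.sum_mul, hν]
    _ = ν w * (w i - w' i) := Finset.sum_eq_single_of_mem w hw.mem fun v hv hvw ↦ by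
      rw [hconst v (hw'.mem_cell v (Finset.mem_erase.2 ⟨hvw, hv⟩)), sub_self, mul_zero]
  have hle := PiLp.norm_apply_le (∑ v ∈ s, ν v • v) i
  rw [hcoord, Real.norm_eq_abs, abs_mul, hwi] at hle
  linarith

theorem sum_erase_add_single_smul {ι E : Type*} [DecidableEq ι] [AddCommGroup E] [Module ℝ E]
    {s : Finset ι} {w w' : ι} (hw : w ∈ s) (hw' : w' ∈ s.erase w) (ν : ι → ℝ) (f : ι → E) :
    ∑ v ∈ s.erase w, (ν + Pi.single w' (ν w) : ι → ℝ) v • f v =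
      ∑ v ∈ s, ν v • f v + ν w • (f w' - f w) := by
  simp only [Pi.add_apply, add_smul, Finset.sum_add_distrib, Pi.single_apply, ite_smul, zero_smul,
    Finset.sum_ite_eq', hw', if_true]
  rw [← Finset.sum_erase_add _ _ hw, smul_sub]
  abel

theorem IsWhitneyChain.norm_add_smul_sub_le (hs : IsWhitneyChain Z s) (hw : IsTopVertex Z s w)
    {w' : Euc m} [DecidableEq (Euc m)] (hw' : IsTopVertex Z (s.erase w) w') {ν : Euc m → ℝ}
    (hν : ∑ v ∈ s, ν v = 0) :
    ‖∑ v ∈ s, ν v • v + ν w • (w' - w)‖ ≤ (1 + 2 * √m) * ‖∑ v ∈ s, ν v • v‖ := by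
  have hdist : ‖w' - w‖ ≤ √m * 2 ^ (-whitneyScale Z w) := dist_eq_norm w' w ▸
    dist_le_of_mem_dyadicCell (hw.mem_cell w' (Finset.mem_of_mem_erase hw'.mem))
      (mem_whitneyCell_self Z w)
  have hsmul : ‖ν w • (w' - w)‖ ≤ |ν w| * (√m * 2 ^ (-whitneyScale Z w)) := by
    rw [norm_smul, Real.norm_eq_abs]
    gcongr
  have htop := mul_le_mul_of_nonneg_left (hs.abs_coeff_top_mul_le hw hw' hν) (Real.sqrt_nonneg m)
  linarith [norm_add_le (∑ v ∈ s, ν v • v) (ν w • (w' - w))]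

theorem abs_apply_le_abs_add_single_add_abs {ι : Type*} [DecidableEq ι] (ν : ι → ℝ) (a : ℝ)
    (i j : ι) : |ν i| ≤ |(ν + Pi.single j a : ι → ℝ) i| + |a| := by
  have hsingle : |(Pi.single j a : ι → ℝ) i| ≤ |a| := by
    rw [Pi.single_apply]
    split_ifs <;> simp
  calc |ν i|
    _ = |(ν + Pi.single j a : ι → ℝ) i - (Pi.single j a : ι → ℝ) i| := by simp
    _ ≤ |(ν + Pi.single j a : ι → ℝ) i| + |a| := (abs_sub _ _).trans (by gcongr)

/-- The simplices of the triangulation are uniformly fat: moving the weight of the top vertex to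
the next one changes the vector `∑ ν v • v` by a bounded multiple of its norm and leaves a shorter
chain. -/
theorem IsWhitneyChain.abs_coeff_mul_le (hs : IsWhitneyChain Z s) (hw : IsTopVertex Z s w)
    {ν : Euc m → ℝ} (hν : ∑ v ∈ s, ν v = 0) (hv : v ∈ s) :
    |ν v| * 2 ^ (-whitneyScale Z w) ≤ (4 + 4 * √m) ^ s.card * ‖∑ v ∈ s, ν v • v‖ := by
  classical
  induction s using Finset.strongInduction generalizing v w ν with
  | H s ih =>
    rcases (s.erase w).eq_empty_or_nonempty with he | hne
    · obtain rfl : s = {w} := by rw [← Finset.insert_erase hw.mem, he, insert_empty_eq]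
      obtain rfl := Finset.mem_singleton.1 hv
      rw [Finset.sum_singleton] at hν
      rw [hν, abs_zero, zero_mul]
      positivity
    have hs' := hs.mono (Finset.erase_subset w s)
    obtain ⟨w', hw'⟩ := hs'.exists_isTopVertex hne
    have htop := hs.abs_coeff_top_mul_le hw hw' hν
    have hshift := hs.norm_add_smul_sub_le hw hw' hν
    rw [← sum_erase_add_single_smul hw.mem hw'.mem ν fun v ↦ v] at hshift
    set μ : Euc m → ℝ := ν + Pi.single w' (ν w) with hμ
    have hμ₀ : ∑ v ∈ s.erase w, μ v = 0 := by
      simpa [hν, hμ] using sum_erase_add_single_smul hw.mem hw'.mem ν fun _ ↦ (1 : ℝ)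
    have hscale := two_zpow_neg_whitneyScale_le (hs.mem_vertices w hw.mem).1
      (hw.mem_cell w' (Finset.mem_of_mem_erase hw'.mem))
    have hA : 0 ≤ √m := Real.sqrt_nonneg m
    set X := ‖∑ v ∈ s, ν v • v‖
    set P : ℝ := (4 + 4 * √m) ^ (s.erase w).card with hP
    have hX₀ : 0 ≤ X := norm_nonneg _
    have hX : X ≤ P * X := le_mul_of_one_le_left hX₀ (one_le_pow₀ (by linarith))
    rw [← Finset.card_erase_add_one hw.mem, pow_succ, ← hP]
    by_cases hvw : v = w
    · rw [hvw]
      linarith [mul_nonneg hA (hX₀.trans hX)]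
    have hvs : v ∈ s.erase w := Finset.mem_erase.2 ⟨hvw, hv⟩
    have hνμ : |ν v| ≤ |μ v| + |ν w| := abs_apply_le_abs_add_single_add_abs ν (ν w) v w'
    calc |ν v| * 2 ^ (-whitneyScale Z w)
      _ ≤ |μ v| * (2 * 2 ^ (-whitneyScale Z w')) + |ν w| * 2 ^ (-whitneyScale Z w) := by
        linarith [mul_le_mul_of_nonneg_right hνμ (zpow_pos two_pos (-whitneyScale Z w)).le,
          mul_le_mul_of_nonneg_left hscale (abs_nonneg (μ v))]
      _ ≤ 2 * (P * ((1 + 2 * √m) * X)) + 2 * (P * X) := by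
        linarith [ih _ (Finset.erase_ssubset hw.mem) hs' hw' hμ₀ hvs,
          mul_le_mul_of_nonneg_left hshift (show 0 ≤ P by positivity)]
      _ = P * (4 + 4 * √m) * X := by ring

theorem IsWhitneyChain.affineIndependent (hs : IsWhitneyChain Z s) :
    AffineIndependent ℝ ((↑) : s → Euc m) := by
  classical
  rw [affineIndependent_iff_of_fintype]
  intro ν hν hνX v
  rw [Finset.univ.weightedVSub_eq_linear_combination hν] at hνX
  set ν' : Euc m → ℝ := fun v ↦ if h : v ∈ s then ν ⟨v, h⟩ else 0 with hν'
  have hν'_coe (v : s) : ν' v = ν v := by simp [hν']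
  have hsum : ∑ v ∈ s, ν' v = 0 := by
    rw [← Finset.sum_coe_sort, ← hν]
    exact Finset.sum_congr rfl fun v _ ↦ hν'_coe v
  have hsmul : ∑ v ∈ s, ν' v • v = 0 := by
    rw [← Finset.sum_coe_sort, ← hνX]
    exact Finset.sum_congr rfl fun v _ ↦ by rw [hν'_coe]
  obtain ⟨w, hw⟩ := hs.exists_isTopVertex ⟨v, v.2⟩
  have hle := hs.abs_coeff_mul_le hw hsum v.2
  rw [hsmul, norm_zero, mul_zero, hν'_coe] at hle
  exact abs_nonpos_iff.1 (nonpos_of_mul_nonpos_left hle (by positivity))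

theorem IsWhitneyChain.card_le (hs : IsWhitneyChain Z s) : s.card ≤ m + 1 := by
  have h := hs.affineIndependent.card_le_finrank_succ
  rw [Fintype.card_coe] at h
  exact h.trans (Nat.add_le_add_right
    ((Submodule.finrank_le _).trans_eq finrank_euclideanSpace_fin) 1)

/-- The fatness constant of the triangulation: it bounds the product of the size of a simplex and
the Lipschitz constants of its barycentric coordinates. -/
def fatnessConst (m : ℕ) : ℝ := (4 + 4 * √m) ^ (m + 1)

theorem fatnessConst_pos (m : ℕ) : 0 < fatnessConst m := by
  unfold fatnessConst
  positivity

theorem IsWhitneyChain.abs_coeff_mul_le_fatnessConst_mul (hs : IsWhitneyChain Z s)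
    (hw : IsTopVertex Z s w) {ν : Euc m → ℝ} (hν : ∑ v ∈ s, ν v = 0) (hv : v ∈ s) :
    |ν v| * 2 ^ (-whitneyScale Z w) ≤ fatnessConst m * ‖∑ v ∈ s, ν v • v‖ := by
  refine (hs.abs_coeff_mul_le hw hν hv).trans (mul_le_mul_of_nonneg_right ?_ (norm_nonneg _))
  exact pow_le_pow_right₀ (by linarith [Real.sqrt_nonneg m]) hs.card_le

theorem IsWhitneyChain.abs_sub_mul_le_dist_affineCombination (hs : IsWhitneyChain Z s)
    (hw : IsTopVertex Z s w) {μ ν : Euc m → ℝ} (hμ : ∑ v ∈ s, μ v = 1) (hν : ∑ v ∈ s, ν v = 1)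
    (hv : v ∈ s) :
    |μ v - ν v| * 2 ^ (-whitneyScale Z w) ≤ fatnessConst m *
      dist (s.affineCombination ℝ id μ) (s.affineCombination ℝ id ν) := by
  have hsum : ∑ v ∈ s, (μ - ν) v = 0 := by
    simp [hμ, hν]
  rw [dist_eq_norm_vsub (Euc m), Finset.affineCombination_vsub,
    s.weightedVSub_eq_linear_combination hsum]
  exact hs.abs_coeff_mul_le_fatnessConst_mul hw hsum hv

/-- The barycentric subdivision of the Whitney cell decomposition of the complement of
`closure Z`. -/
def whitneyTriangulation (Z : Set (Euc m)) : Geometry.SimplicialComplex ℝ (Euc m) where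
  faces := {s | s.Nonempty ∧ IsWhitneyChain Z s}
  isRelLowerSet_faces := fun _ hs ↦ ⟨hs.1, fun _ hts ht ↦ ⟨ht, hs.2.mono hts⟩⟩
  indep := fun hs ↦ hs.2.affineIndependent
  inter_subset_convexHull := fun hs ht _ hx ↦ hs.2.mem_convexHull_inter ht.2 hx.1 hx.2

end Chains

/-! ### The triangulation covers the complement -/

section DyadicSubdivision

variable {m : ℕ} {k : ℤ} {w x y : Euc m}

theorem mem_dyadicCell_iff_of_dyadicCenter_eq (hw : dyadicCenter k w = w) :
    y ∈ dyadicCell k w ↔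
      ∀ i, |y i - w i| ≤ if i ∈ freeCoords k w then (2 : ℝ) ^ (-k) / 2 else 0 := by
  refine forall_congr' fun i ↦ ?_
  have hwi : w i * 2 ^ k = (⌊w i * 2 ^ k⌋ + ⌈w i * 2 ^ k⌉) / 2 := by
    rw [← dyadicCenter_apply_mul, hw]
  have h2k : (0 : ℝ) < 2 ^ k := by positivity
  have hscale : |y i - w i| * 2 ^ k = |y i * 2 ^ k - w i * 2 ^ k| := by
    rw [← sub_mul, abs_mul, abs_of_pos h2k]
  rw [← mul_le_mul_iff_left₀ h2k, hscale, abs_le, mem_Icc]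
  split_ifs with hi
  · have hceil := (Int.ceil_eq_floor_add_one_iff_notMem _).2 (mem_freeCoords.1 hi)
    rw [hceil] at hwi ⊢
    rw [zpow_neg, div_mul_eq_mul_div, inv_mul_cancel₀ h2k.ne']
    push_cast at hwi ⊢
    constructor <;> rintro ⟨h₁, h₂⟩ <;> constructor <;> linarith
  · have hceil := ceil_eq_floor_of_mem_range (not_not.1 (mem_freeCoords.not.1 hi))
    rw [hceil] at hwi ⊢
    constructor <;> rintro ⟨h₁, h₂⟩ <;> constructor <;> linarith

theorem notMem_freeCoords_of_abs_sub_eq (hw : dyadicCenter k w = w) {i : Fin m}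
    (hi : i ∈ freeCoords k w) (hy : |y i - w i| = 2 ^ (-k) / 2) : i ∉ freeCoords k y := by
  have hwi : w i * 2 ^ k = (⌊w i * 2 ^ k⌋ + ⌈w i * 2 ^ k⌉) / 2 := by
    rw [← dyadicCenter_apply_mul, hw]
  have h2k : (2 : ℝ) ^ (-k) * 2 ^ k = 1 := by
    rw [← zpow_add₀ two_ne_zero, neg_add_cancel, zpow_zero]
  rw [(Int.ceil_eq_floor_add_one_iff_notMem _).2 (mem_freeCoords.1 hi)] at hwi
  rw [mem_freeCoords, not_not]
  push_cast at hwi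
  rcases (abs_eq (by positivity)).1 hy with h | h
  · exact ⟨⌊w i * 2 ^ k⌋ + 1, by push_cast; linear_combination -hwi - 2 ^ k * h - h2k / 2⟩
  · exact ⟨⌊w i * 2 ^ k⌋, by linear_combination -hwi - 2 ^ k * h + h2k / 2⟩

/-- `y` is the point where the ray from the barycenter `w` through `x` leaves the cell. -/
theorem exists_lineMap_eq_of_mem_dyadicCell (hw : dyadicCenter k w = w) (hx : x ∈ dyadicCell k w)
    (hne : (freeCoords k w).Nonempty) :
    ∃ y ∈ dyadicCell k w, ∃ i ∈ freeCoords k w, i ∉ freeCoords k y ∧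
      ∃ θ ∈ Icc (0 : ℝ) 1, AffineMap.lineMap w y θ = x := by
  have hw' {y : Euc m} := mem_dyadicCell_iff_of_dyadicCenter_eq (y := y) hw
  obtain ⟨r, hr, hr₀⟩ : ∃ r, r = (2 : ℝ) ^ (-k) / 2 ∧ 0 < r := ⟨_, rfl, by positivity⟩
  have hface {i : Fin m} {y : Euc m} (hi : i ∈ freeCoords k w) (hy : |y i - w i| = r) :
      i ∉ freeCoords k y := notMem_freeCoords_of_abs_sub_eq hw hi (hr ▸ hy)
  simp only [← hr] at hw'
  obtain ⟨i, hi, hmax⟩ := Finset.exists_max_image _ (fun i ↦ |x i - w i|) hne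
  rcases (abs_nonneg (x i - w i)).eq_or_lt with hzero | hpos
  · have hxw : w = x := by
      ext j
      by_cases hj : j ∈ freeCoords k w
      · exact (sub_eq_zero.1 (abs_nonpos_iff.1 ((hmax j hj).trans hzero.ge))).symm
      · exact (apply_eq_of_mem_dyadicCell hj hx).symm
    refine ⟨w + EuclideanSpace.single i r, hw'.2 fun j ↦ ?_, i, hi,
      hface hi (by simp [hr₀.le]), 0, by simp, by simpa using hxw⟩
    rcases eq_or_ne j i with rfl | hji
    · simp [hi, abs_of_pos hr₀]
    · simp only [PiLp.add_apply, add_sub_cancel_left, PiLp.single_apply, hji, if_false, abs_zero]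
      positivity
  · have hle : |x i - w i| ≤ r := by simpa [hi] using hw'.1 hx i
    set M := |x i - w i| with hM
    have happly (j : Fin m) :
        |AffineMap.lineMap w x (r / M) j - w j| = r / M * |x j - w j| := by
      simp [AffineMap.lineMap_apply, abs_mul, abs_of_pos (div_pos hr₀ hpos)]
    refine ⟨AffineMap.lineMap w x (r / M), hw'.2 fun j ↦ ?_, i, hi,
      hface hi (by rw [happly, ← hM, div_mul_cancel₀ _ hpos.ne']),
      M / r, ⟨by positivity, (div_le_one hr₀).2 hle⟩, ?_⟩
    · rw [happly]
      split_ifs with hj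
      · rw [div_mul_eq_mul_div, div_le_iff₀ hpos]
        exact mul_le_mul_of_nonneg_left (hmax j hj) hr₀.le
      · simp [apply_eq_of_mem_dyadicCell hj hx]
    · rw [AffineMap.lineMap_apply, AffineMap.lineMap_vsub_left, smul_smul,
        div_mul_div_cancel₀ hr₀.ne', div_self hpos.ne', one_smul, vsub_vadd]

theorem exists_mul_two_notMem_range {s t : ℝ} (hs : s ∉ range ((↑) : ℤ → ℝ))
    (ht : t ∈ Icc (⌊s⌋ : ℝ) ⌈s⌉) : ∃ u ∈ Icc (⌊s⌋ : ℝ) ⌈s⌉,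
      u * 2 ∉ range ((↑) : ℤ → ℝ) ∧ t * 2 ∈ Icc (⌊u * 2⌋ : ℝ) ⌈u * 2⌉ := by
  rw [(Int.ceil_eq_floor_add_one_iff_notMem _).2 hs] at ht ⊢
  push_cast at ht ⊢
  set a := ⌊s⌋
  obtain ⟨l, hl, htl, hlt⟩ : ∃ l : ℤ, (l = 2 * a ∨ l = 2 * a + 1) ∧ l ≤ t * 2 ∧ t * 2 ≤ l + 1 := by
    rcases le_total (t * 2) (2 * a + 1) with h | h
    · exact ⟨2 * a, Or.inl rfl, by push_cast; linarith [ht.1], by push_cast; exact h⟩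
    · exact ⟨2 * a + 1, Or.inr rfl, by push_cast; exact h, by push_cast; linarith [ht.2]⟩
  obtain ⟨hfloor, hceil⟩ := floor_eq_and_ceil_eq_add_one (l := l) (t := (l / 2 + 1 / 4) * 2)
    (by linarith) (by linarith)
  refine ⟨l / 2 + 1 / 4, ?_, (Int.ceil_eq_floor_add_one_iff_notMem _).1 (by omega), ?_⟩
  · rcases hl with rfl | rfl <;> push_cast <;> constructor <;> linarith
  · rw [hfloor, hceil]
    push_cast
    exact ⟨htl, hlt⟩

theorem exists_mem_dyadicCell_freeCoords {S : Finset (Fin m)} (hS : S ⊆ freeCoords k w)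
    (hy : y ∈ dyadicCell k w) (hyS : freeCoords k y ⊆ S) :
    ∃ z ∈ dyadicCell k w, y ∈ dyadicCell (k + 1) z ∧ freeCoords k z ⊆ S ∧
      S ⊆ freeCoords (k + 1) z := by
  have h2k : (2 : ℝ) ^ k ≠ 0 := by positivity
  have hexists (i : Fin m) : ∃ u : ℝ, u * 2 ^ k ∈ Icc (⌊w i * 2 ^ k⌋ : ℝ) ⌈w i * 2 ^ k⌉ ∧
      y i * 2 ^ (k + 1) ∈ Icc (⌊u * 2 ^ (k + 1)⌋ : ℝ) ⌈u * 2 ^ (k + 1)⌉ ∧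
      (i ∈ S → u * 2 ^ (k + 1) ∉ range ((↑) : ℤ → ℝ)) ∧ (i ∉ S → u = y i) := by
    simp only [zpow_add_one₀ (two_ne_zero' ℝ), ← mul_assoc]
    by_cases hi : i ∈ S
    · obtain ⟨u, hu, hu₂, hyu⟩ := exists_mul_two_notMem_range (mem_freeCoords.1 (hS hi)) (hy i)
      exact ⟨u / 2 ^ k, by simp [div_mul_cancel₀ _ h2k, hu, hu₂, hyu, hi]⟩
    · exact ⟨y i, hy i, ⟨Int.floor_le _, Int.le_ceil _⟩, fun h ↦ absurd h hi, fun _ ↦ rfl⟩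
  choose u hu hyu huS huy using hexists
  refine ⟨WithLp.toLp 2 u, hu, hyu, fun i hi ↦ ?_, fun i hi ↦ mem_freeCoords.2 (huS i hi)⟩
  by_contra hiS
  refine hiS (hyS (mem_freeCoords.2 ?_))
  rw [← huy i hiS]
  exact mem_freeCoords.1 hi

end DyadicSubdivision

section Cover

variable {m : ℕ} {Z : Set (Euc m)} {s : Finset (Euc m)} {w x y z : Euc m}

theorem freeCoords_whitneyCenter (hz : 0 < infDist z Z) :
    freeCoords (whitneyScale Z (whitneyCenter Z z)) (whitneyCenter Z z) =
      freeCoords (whitneyScale Z z) z := by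
  rw [whitneyScale_whitneyCenter hz]
  exact freeCoords_eq_of_dyadicCell_eq (dyadicCell_dyadicCenter _ z)

/-- The facet of the cell of `w` through `y` may be subdivided at the next finer scale, and `h` is
the barycenter of a piece containing `y`. -/
theorem exists_whitneyVertex_freeCoords_eq_erase (hw : w ∈ whitneyVertices Z)
    (hy : y ∈ whitneyCell Z w) {i : Fin m} (hi : i ∈ freeCoords (whitneyScale Z w) w)
    (hiy : i ∉ freeCoords (whitneyScale Z w) y) :
    ∃ h ∈ whitneyVertices Z,
      freeCoords (whitneyScale Z h) h = (freeCoords (whitneyScale Z w) w).erase i ∧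
      y ∈ whitneyCell Z h ∧ h ∈ whitneyCell Z w ∧ w ∉ whitneyCell Z h := by
  obtain ⟨z, hzw, hyz, hz₁, hz₂⟩ := exists_mem_dyadicCell_freeCoords (Finset.erase_subset i _) hy
    (Finset.subset_erase.2 ⟨freeCoords_subset_of_mem_dyadicCell hy, hiy⟩)
  have hz := infDist_pos_of_mem_whitneyCell hw.1 hzw
  have hle := whitneyScale_le_of_mem_whitneyCell hw.1 hzw
  have hle' := whitneyScale_le_add_one_of_mem_whitneyCell hw.1 hzw
  have hfree : freeCoords (whitneyScale Z (whitneyCenter Z z)) (whitneyCenter Z z) =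
      (freeCoords (whitneyScale Z w) w).erase i :=
    (freeCoords_whitneyCenter hz).trans
      (((freeCoords_mono hle z).trans hz₁).antisymm (hz₂.trans (freeCoords_mono hle' z)))
  have hyh : y ∈ whitneyCell Z (whitneyCenter Z z) := by
    rw [whitneyCell_whitneyCenter hz]
    exact dyadicCell_antitone z hle' hyz
  refine ⟨whitneyCenter Z z, whitneyCenter_mem_whitneyVertices hz, hfree, hyh,
    whitneyCell_subset hw.1 hzw (whitneyCenter_mem_whitneyCell Z z), fun hwh ↦ ?_⟩
  have hih : i ∉ freeCoords (whitneyScale Z (whitneyCenter Z z)) (whitneyCenter Z z) := by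
    simp [hfree]
  rw [mem_freeCoords] at hi hiy
  rw [apply_eq_of_mem_dyadicCell hih hyh, ← apply_eq_of_mem_dyadicCell hih hwh] at hiy
  exact hiy hi

theorem IsWhitneyChain.insert [DecidableEq (Euc m)] (hs : IsWhitneyChain Z s)
    (hw : w ∈ whitneyVertices Z) (hsw : ∀ v ∈ s, v ∈ whitneyCell Z w) :
    IsWhitneyChain Z (insert w s) where
  mem_vertices := by simpa [Finset.forall_mem_insert] using ⟨hw, hs.mem_vertices⟩
  total := by
    simp only [Finset.forall_mem_insert]
    exact ⟨⟨Or.inl (mem_whitneyCell_self Z w), fun v hv ↦ Or.inr (hsw v hv)⟩,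
      fun v hv ↦ ⟨Or.inl (hsw v hv), hs.total v hv⟩⟩

theorem exists_isWhitneyChain_of_mem_whitneyCell (hw : w ∈ whitneyVertices Z)
    (hx : x ∈ whitneyCell Z w) :
    ∃ s, IsWhitneyChain Z s ∧ s.card = (freeCoords (whitneyScale Z w) w).card + 1 ∧
      IsTopVertex Z s w ∧ x ∈ convexHull ℝ (s : Set (Euc m)) := by
  classical
  induction hd : (freeCoords (whitneyScale Z w) w).card generalizing w x with
  | zero =>
    obtain rfl : x = w := by
      ext i
      exact apply_eq_of_mem_dyadicCell (by simp [Finset.card_eq_zero.1 hd]) hx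
    exact ⟨{x}, ⟨by simpa using hw, by simp [mem_whitneyCell_self]⟩, by simp,
      ⟨by simp, by simp [mem_whitneyCell_self]⟩, by simp⟩
  | succ d ih =>
    obtain ⟨y, hy, i, hi, hiy, θ, hθ, rfl⟩ := exists_lineMap_eq_of_mem_dyadicCell hw.2 hx
      (Finset.card_pos.1 (by omega))
    obtain ⟨h, hh, hfree, hyh, hhw, hwh⟩ := exists_whitneyVertex_freeCoords_eq_erase hw hy hi hiy
    obtain ⟨s, hs, hcard, hhs, hys⟩ := ih hh hyh (by
      rw [hfree, Finset.card_erase_of_mem hi, hd, Nat.add_sub_cancel])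
    have hsw (v : Euc m) (hv : v ∈ s) : v ∈ whitneyCell Z w :=
      whitneyCell_subset hw.1 hhw (hhs.mem_cell v hv)
    have hws : w ∉ s := fun hws ↦ hwh (hhs.mem_cell w hws)
    refine ⟨insert w s, hs.insert hw hsw, by rw [Finset.card_insert_of_notMem hws, hcard],
      ⟨Finset.mem_insert_self w s,
        (Finset.forall_mem_insert _ _ _).2 ⟨mem_whitneyCell_self Z w, hsw⟩⟩, ?_⟩
    exact (convex_convexHull ℝ _).lineMap_mem (subset_convexHull ℝ _ (by simp))
      (convexHull_mono (by simp) hys) hθ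

theorem exists_isWhitneyChain_card_eq (hx : 0 < infDist x Z) :
    ∃ s, IsWhitneyChain Z s ∧ s.card = m + 1 ∧ x ∈ convexHull ℝ (s : Set (Euc m)) := by
  have hm := pos_dim_of_infDist_pos hx
  obtain ⟨p, hp, -⟩ := exists_mem_Ico_zpow
    (show 0 < infDist x Z / (3 * √m) by positivity) (one_lt_two (α := ℝ))
  rw [le_div_iff₀ (by positivity)] at hp
  set z : Euc m := WithLp.toLp 2 fun i ↦ (⌊x i * 2 ^ (-p)⌋ + 1 / 2 : ℝ) / 2 ^ (-p) with hz
  have hzi (i : Fin m) : z i * 2 ^ (-p) = ⌊x i * 2 ^ (-p)⌋ + 1 / 2 := by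
    rw [hz, PiLp.toLp_apply, div_mul_cancel₀ _ (by positivity)]
  have hfc (i : Fin m) := floor_eq_and_ceil_eq_add_one (l := ⌊x i * 2 ^ (-p)⌋)
    (t := z i * 2 ^ (-p)) (by rw [hzi]; linarith) (by rw [hzi]; linarith)
  have hxz : x ∈ dyadicCell (-p) z := fun i ↦ by
    rw [(hfc i).1, (hfc i).2]
    push_cast
    exact ⟨Int.floor_le _, (Int.lt_floor_add_one _).le⟩
  have hdist : 2 * √m * 2 ^ (-(-p)) ≤ infDist z Z := by
    have hle := dist_le_of_mem_dyadicCell hxz (mem_dyadicCell_self _ z)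
    rw [neg_neg] at hle ⊢
    linarith [infDist_le_infDist_add_dist (s := Z) (x := x) (y := z)]
  have hz₀ : 0 < infDist z Z := lt_of_lt_of_le (by positivity) hdist
  have hscale := whitneyScale_le hz₀ (isAdmissibleScale_of_le_infDist hdist)
  have hfree : freeCoords (whitneyScale Z (whitneyCenter Z z)) (whitneyCenter Z z) =
      Finset.univ := by
    rw [freeCoords_whitneyCenter hz₀, Finset.eq_univ_iff_forall]
    refine fun i ↦ freeCoords_mono hscale z (mem_freeCoords.2 ?_)
    exact (Int.ceil_eq_floor_add_one_iff_notMem _).1 (by rw [(hfc i).1, (hfc i).2])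
  obtain ⟨s, hs, hcard, -, hxs⟩ := exists_isWhitneyChain_of_mem_whitneyCell
    (whitneyCenter_mem_whitneyVertices hz₀) (whitneyCell_whitneyCenter hz₀ ▸
      dyadicCell_antitone z hscale hxz : x ∈ whitneyCell Z (whitneyCenter Z z))
  exact ⟨s, hs, by rw [hcard, hfree, Finset.card_fin], hxs⟩

end Cover

/-! ### The Whitney conclusions -/

section Conclusions

theorem le_csInf_and_csInf_le_csSup_and_csSup_le {S : Set ℝ} {a b : ℝ} (hne : S.Nonempty)
    (h : S ⊆ Icc a b) : a ≤ sInf S ∧ sInf S ≤ sSup S ∧ sSup S ≤ b :=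
  ⟨le_csInf hne fun _ hx ↦ (h hx).1,
    Real.sInf_le_sSup S ⟨a, fun _ hx ↦ (h hx).1⟩ ⟨b, fun _ hx ↦ (h hx).2⟩,
    csSup_le hne fun _ hx ↦ (h hx).2⟩

variable {m : ℕ} {Z : Set (Euc m)} {s t ω : Finset (Euc m)} {v w x y : Euc m} {a b : ℝ}

theorem faceBeta_bounds (hω : 2 ≤ ω.card)
    (h : ∀ t ⊂ ω, t.Nonempty →
      infDist (ω.centroid ℝ id) (affineSpan ℝ (t : Set (Euc m))) ∈ Icc a b) :
    a ≤ faceBetaMin m ω ∧ faceBetaMin m ω ≤ faceBetaMax m ω ∧ faceBetaMax m ω ≤ b := by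
  refine le_csInf_and_csInf_le_csSup_and_csSup_le ?_ ?_
  · obtain ⟨t, ht, hcard⟩ := Finset.exists_subset_card_eq (Nat.sub_le ω.card 1)
    exact ⟨_, t, ht, hcard, rfl⟩
  · rintro _ ⟨t, ht, hcard, rfl⟩
    exact h t (Finset.ssubset_iff_subset_ne.2 ⟨ht, by rintro rfl; omega⟩)
      (Finset.card_pos.1 (by omega))

theorem beta_bounds (hs : 2 ≤ s.card)
    (h : ∀ ω ⊆ s, ∀ t ⊂ ω, t.Nonempty →
      infDist (ω.centroid ℝ id) (affineSpan ℝ (t : Set (Euc m))) ∈ Icc a b) :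
    a ≤ betaLow m s ∧ betaLow m s ≤ betaHigh m s ∧ betaHigh m s ≤ b := by
  have hface (ω : Finset (Euc m)) (hωs : ω ⊆ s) (hω : 2 ≤ ω.card) :=
    faceBeta_bounds hω (h ω hωs)
  have hs_face := hface s subset_rfl hs
  have hlow : {b | ∃ ω ⊆ s, 2 ≤ ω.card ∧ b = faceBetaMin m ω} ⊆ Icc a b := by
    rintro _ ⟨ω, hωs, hω, rfl⟩
    exact ⟨(hface ω hωs hω).1, (hface ω hωs hω).2.1.trans (hface ω hωs hω).2.2⟩
  have hhigh : {b | ∃ ω ⊆ s, 2 ≤ ω.card ∧ b = faceBetaMax m ω} ⊆ Icc a b := by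
    rintro _ ⟨ω, hωs, hω, rfl⟩
    exact ⟨(hface ω hωs hω).1.trans (hface ω hωs hω).2.1, (hface ω hωs hω).2.2⟩
  refine ⟨le_csInf ⟨_, s, subset_rfl, hs, rfl⟩ fun _ h ↦ (hlow h).1, ?_,
    csSup_le ⟨_, s, subset_rfl, hs, rfl⟩ fun _ h ↦ (hhigh h).2⟩
  calc betaLow m s
    _ ≤ faceBetaMin m s := csInf_le ⟨a, fun _ h ↦ (hlow h).1⟩ ⟨s, subset_rfl, hs, rfl⟩
    _ ≤ faceBetaMax m s := hs_face.2.1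
    _ ≤ betaHigh m s := le_csSup ⟨b, fun _ h ↦ (hhigh h).2⟩ ⟨s, subset_rfl, hs, rfl⟩

theorem dist_le_simpDiam (hx : x ∈ convexHull ℝ (s : Set (Euc m)))
    (hy : y ∈ convexHull ℝ (s : Set (Euc m))) : dist x y ≤ simpDiam m s :=
  dist_le_diam_of_mem (isBounded_convexHull.2 s.finite_toSet.isBounded) hx hy

theorem infDist_centroid_affineSpan_le_simpDiam (hω : ω ⊆ s) (ht : t ⊆ ω) (hne : t.Nonempty) :
    infDist (ω.centroid ℝ id) (affineSpan ℝ (t : Set (Euc m))) ≤ simpDiam m s := by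
  obtain ⟨v, hv⟩ := hne
  exact (infDist_le_dist_of_mem (subset_affineSpan ℝ _ (Finset.mem_coe.2 hv))).trans
    (dist_le_simpDiam (convexHull_mono (Finset.coe_subset.2 hω)
      (ω.centroid_mem_convexHull ⟨v, ht hv⟩)) (subset_convexHull ℝ _ (hω (ht hv))))

theorem exists_eq_affineCombination_of_mem_affineSpan {P : Type*} {V : Type*} [AddCommGroup V]
    [Module ℝ V] [AddTorsor V P] {t : Finset P} {p : P} (hp : p ∈ affineSpan ℝ (t : Set P)) :
    ∃ μ : P → ℝ, ∑ v ∈ t, μ v = 1 ∧ p = t.affineCombination ℝ id μ := by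
  rw [← image_id (t : Set P)] at hp
  obtain ⟨u, μ, hut, hμ, rfl⟩ := eq_affineCombination_of_mem_affineSpan_image hp
  exact ⟨(u : Set P).indicator μ, by rw [Finset.sum_indicator_subset μ hut, hμ],
    Finset.affineCombination_indicator_subset μ id hut⟩

theorem IsWhitneyChain.le_infDist_centroid_affineSpan (hs : IsWhitneyChain Z s)
    (hw : IsTopVertex Z s w) (hω : ω ⊆ s) (ht : t ⊂ ω) (hne : t.Nonempty) :
    2 ^ (-whitneyScale Z w) / ((m + 1) * fatnessConst m) ≤
      infDist (ω.centroid ℝ id) (affineSpan ℝ (t : Set (Euc m))) := by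
  have hB := fatnessConst_pos m
  obtain ⟨v, hvω, hvt⟩ := Finset.exists_of_ssubset ht
  have hωcard : (0 : ℝ) < ω.card := Nat.cast_pos.2 (Finset.card_pos.2 ⟨v, hvω⟩)
  refine (le_infDist (hne.to_set.affineSpan ℝ)).2 fun y hy ↦ ?_
  obtain ⟨μ, hμ, rfl⟩ := exists_eq_affineCombination_of_mem_affineSpan hy
  have hle := hs.abs_sub_mul_le_dist_affineCombination hw
    (μ := (ω : Set (Euc m)).indicator (ω.centroidWeights ℝ)) (ν := (t : Set (Euc m)).indicator μ)
    (by rw [Finset.sum_indicator_subset _ hω,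
      ω.sum_centroidWeights_eq_one_of_nonempty ℝ ⟨v, hvω⟩])
    (by rw [Finset.sum_indicator_subset _ (ht.subset.trans hω), hμ]) (hω hvω)
  rw [← Finset.affineCombination_indicator_subset _ _ hω,
    ← Finset.affineCombination_indicator_subset _ _ (ht.subset.trans hω),
    ← Finset.centroid_def, indicator_of_mem (Finset.mem_coe.2 hvω),
    indicator_of_notMem (mt Finset.mem_coe.1 hvt), Finset.centroidWeights_apply, sub_zero,
    abs_of_pos (inv_pos.2 hωcard), inv_mul_eq_div, div_le_iff₀ hωcard] at hle
  have hcard : (ω.card : ℝ) ≤ m + 1 := by exact_mod_cast (hs.mono hω).card_le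
  rw [div_le_iff₀ (by positivity)]
  calc (2 : ℝ) ^ (-whitneyScale Z w)
    _ ≤ fatnessConst m * dist (ω.centroid ℝ id) (t.affineCombination ℝ id μ) * ω.card := hle
    _ ≤ fatnessConst m * dist (ω.centroid ℝ id) (t.affineCombination ℝ id μ) * (m + 1) := by
      gcongr
    _ = dist (ω.centroid ℝ id) (t.affineCombination ℝ id μ) * ((m + 1) * fatnessConst m) := by
      ring

theorem two_zpow_div_two_le_dist (hv : v ∈ whitneyVertices Z) (hw : w ∈ whitneyVertices Z)
    (hvw : v ∈ whitneyCell Z w) (hne : v ≠ w) : 2 ^ (-whitneyScale Z w) / 2 ≤ dist w v := by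
  obtain ⟨i, hi, -⟩ := exists_coord_of_mem_whitneyCell hv hw hvw hne
  rw [← hi, dist_eq_norm]
  exact PiLp.norm_apply_le (w - v) i

theorem IsTopVertex.simpDiam_le (hw : IsTopVertex Z s w) :
    simpDiam m s ≤ √m * 2 ^ (-whitneyScale Z w) :=
  diam_le_of_forall_dist_le (by positivity) fun _ hx _ hy ↦
    dist_le_of_mem_dyadicCell (hw.convexHull_subset hx) (hw.convexHull_subset hy)

theorem IsWhitneyChain.le_simpDiam (hs : IsWhitneyChain Z s) (hw : IsTopVertex Z s w)
    (hcard : 2 ≤ s.card) : 2 ^ (-whitneyScale Z w) / 2 ≤ simpDiam m s := by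
  obtain ⟨v, hv, hvw⟩ := Finset.exists_mem_ne hcard w
  exact (two_zpow_div_two_le_dist (hs.mem_vertices v hv) (hs.mem_vertices w hw.mem)
    (hw.mem_cell v hv) hvw).trans
      (dist_le_simpDiam (subset_convexHull ℝ _ hw.mem) (subset_convexHull ℝ _ hv))

theorem IsWhitneyChain.setDist_mem_Icc (hs : IsWhitneyChain Z s) (hw : IsTopVertex Z s w)
    (hne : Z.Nonempty) : setDist m (convexHull ℝ (s : Set (Euc m))) Z ∈
      Icc (√m * 2 ^ (-whitneyScale Z w)) (4 * √m * 2 ^ (-whitneyScale Z w)) := by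
  have hwpos := (hs.mem_vertices w hw.mem).1
  have hws : w ∈ convexHull ℝ (s : Set (Euc m)) := subset_convexHull ℝ _ hw.mem
  constructor
  · refine le_csInf (Set.Nonempty.image2 ⟨w, hws⟩ hne) ?_
    rintro _ ⟨x, hx, z, hz, rfl⟩
    exact (le_infDist_of_mem_whitneyCell hwpos (hw.convexHull_subset hx)).trans
      (infDist_le_dist_of_mem hz)
  · obtain ⟨z, hz, hwz⟩ := (infDist_lt_iff hne).1 (infDist_lt_of_pos hwpos)
    refine (csInf_le ⟨0, ?_⟩ (mem_image2_of_mem hws hz)).trans hwz.le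
    rintro _ ⟨x, -, z, -, rfl⟩
    exact dist_nonneg

theorem IsWhitneyChain.simpDiam_div_beta_bounds (hs : IsWhitneyChain Z s)
    (hcard : 2 ≤ s.card) :
    1 ≤ simpDiam m s / betaHigh m s ∧
      simpDiam m s / betaHigh m s ≤ simpDiam m s / betaLow m s ∧
      simpDiam m s / betaLow m s ≤ √m * ((m + 1) * fatnessConst m) := by
  have hB := fatnessConst_pos m
  obtain ⟨w, hw⟩ := hs.exists_isTopVertex (Finset.card_pos.1 (by omega))
  obtain ⟨hlow, hlowhigh, hhigh⟩ := beta_bounds hcard fun ω hω t ht hne ↦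
    ⟨hs.le_infDist_centroid_affineSpan hw hω ht hne,
      infDist_centroid_affineSpan_le_simpDiam hω ht.subset hne⟩
  have hlow_pos : 0 < betaLow m s := lt_of_lt_of_le (by positivity) hlow
  have hhigh_pos := hlow_pos.trans_le hlowhigh
  refine ⟨(one_le_div hhigh_pos).2 hhigh,
    div_le_div_of_nonneg_left diam_nonneg hlow_pos hlowhigh, (div_le_iff₀ hlow_pos).2 ?_⟩
  calc simpDiam m s
    _ ≤ √m * 2 ^ (-whitneyScale Z w) := hw.simpDiam_le
    _ = √m * ((m + 1) * fatnessConst m) *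
        (2 ^ (-whitneyScale Z w) / ((m + 1) * fatnessConst m)) := by field_simp
    _ ≤ √m * ((m + 1) * fatnessConst m) * betaLow m s := by gcongr

theorem skel_whitneyTriangulation (hZ : IsClosed Z) (hne : Z.Nonempty) :
    skel m (whitneyTriangulation Z) m = Zᶜ := by
  ext x
  simp only [skel, mem_iUnion, exists_prop, mem_compl_iff, hZ.notMem_iff_infDist_pos hne]
  constructor
  · rintro ⟨s, ⟨hs, -⟩, hx⟩
    exact hs.2.infDist_pos hx
  · intro hx
    obtain ⟨s, hs, hcard, hxs⟩ := exists_isWhitneyChain_card_eq hx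
    exact ⟨s, ⟨⟨Finset.card_pos.1 (by omega), hs⟩, hcard⟩, hxs⟩

theorem whitneyConclusions_whitneyTriangulation (hZ : IsClosed Z) (hne : Z.Nonempty) :
    WhitneyConclusions m (1 / 2) (√m * ((m + 1) * fatnessConst m) + 1) Z
      (whitneyTriangulation Z) := by
  refine ⟨fun s hs ↦ hs.2.card_le, skel_whitneyTriangulation hZ hne, fun s ⟨hs_ne, hs⟩ hcard ↦ ?_⟩
  obtain ⟨w, hw⟩ := hs.exists_isTopVertex hs_ne
  have hm := pos_dim_of_infDist_pos (hs.mem_vertices w hw.mem).1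
  have hcard_two : 2 ≤ s.card := by omega
  obtain ⟨hle_dist, hdist_le⟩ := hs.setDist_mem_Icc hw hne
  obtain ⟨hhigh, hhighlow, hlow⟩ := hs.simpDiam_div_beta_bounds hcard_two
  refine ⟨hw.simpDiam_le.trans hle_dist, ?_, by linarith, hhighlow, by linarith⟩
  linarith [mul_le_mul_of_nonneg_left (hs.le_simpDiam hw hcard_two) (Real.sqrt_nonneg m),
    mul_nonneg (Real.sqrt_nonneg m) (diam_nonneg (s := convexHull ℝ (s : Set (Euc m))))]

end Conclusions

/-! ### The boundary of the standard simplex -/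

section SimplexBoundary

open scoped NNReal

theorem lipschitzOnWith_inv_smul {X E : Type*} [PseudoMetricSpace X] [SeminormedAddCommGroup E]
    [NormedSpace ℝ E] {s : Set X} {p : X → ℝ} {f : X → E} {A B R δ : ℝ≥0} (hδ : 0 < δ)
    (hp : LipschitzOnWith A p s) (hf : LipschitzOnWith B f s) (hδp : ∀ x ∈ s, δ ≤ p x)
    (hfp : ∀ x ∈ s, ‖f x‖ ≤ R * p x) :
    LipschitzOnWith (δ⁻¹ * (B + A * R)) (fun x ↦ (p x)⁻¹ • f x) s := by
  refine LipschitzOnWith.of_dist_le_mul fun x hx y hy ↦ ?_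
  have hδ' : (0 : ℝ) < δ := hδ
  have hpx := hδ'.trans_le (hδp x hx)
  have hpy := hδ'.trans_le (hδp y hy)
  have hsplit : (p x)⁻¹ • f x - (p y)⁻¹ • f y =
      (p x)⁻¹ • ((f x - f y) + (p y - p x) • (p y)⁻¹ • f y) := by
    match_scalars
    · ring
    · field_simp
      ring
  have hquot : ‖(p y)⁻¹ • f y‖ ≤ R := by
    rw [norm_smul, Real.norm_of_nonneg (by positivity), inv_mul_le_iff₀ hpy, mul_comm]
    exact hfp y hy
  have hpdist : ‖p y - p x‖ ≤ A * dist x y := by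
    rw [← dist_eq_norm, dist_comm]
    exact hp.dist_le_mul x hx y hy
  have hfdist : ‖f x - f y‖ ≤ B * dist x y := dist_eq_norm (f x) (f y) ▸ hf.dist_le_mul x hx y hy
  calc dist ((p x)⁻¹ • f x) ((p y)⁻¹ • f y)
    _ = (p x)⁻¹ * ‖(f x - f y) + (p y - p x) • (p y)⁻¹ • f y‖ := by
      rw [dist_eq_norm, hsplit, norm_smul, Real.norm_of_nonneg (by positivity)]
    _ ≤ (δ : ℝ)⁻¹ * (B * dist x y + A * dist x y * R) := by
      gcongr
      · exact hδp x hx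
      · exact (norm_add_le _ _).trans (add_le_add hfdist (by rw [norm_smul]; gcongr))
    _ = ↑(δ⁻¹ * (B + A * R)) * dist x y := by
      push_cast
      ring

variable {ι : Type*} [Fintype ι] {x y : ι → ℝ}

/-- The boundary of the standard simplex. -/
def simplexBoundary (ι : Type*) [Fintype ι] : Set (ι → ℝ) :=
  {x | x ∈ stdSimplex ℝ ι ∧ ∃ i, x i = 0}

theorem exists_mem_stdSimplex_apply_eq_zero (hx : x ∈ stdSimplex ℝ ι) {b c : ι} (hbc : b ≠ c) :
    ∃ z ∈ stdSimplex ℝ ι, z b = 0 ∧ (∀ i, i ≠ b → i ≠ c → z i = x i) ∧ dist x z ≤ x b := by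
  classical
  set z : ι → ℝ := x + x b • (Pi.single c 1 - Pi.single b 1) with hz
  have hzb : z b = 0 := by simp [hz, hbc]
  have hzc : z c = x c + x b := by simp [hz, hbc.symm]
  have hzi (i : ι) (hib : i ≠ b) (hic : i ≠ c) : z i = x i := by simp [hz, hib, hic]
  refine ⟨z, ⟨fun i ↦ ?_, ?_⟩, hzb, hzi, (dist_pi_le_iff (hx.1 b)).2 fun i ↦ ?_⟩
  · by_cases hib : i = b
    · rw [hib, hzb]
    by_cases hic : i = c
    · rw [hic, hzc]
      exact add_nonneg (hx.1 c) (hx.1 b)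
    · exact (hzi i hib hic).symm ▸ hx.1 i
  · simp [hz, Finset.sum_add_distrib, ← Finset.mul_sum, hx.2]
  · by_cases hib : i = b
    · rw [hib, hzb, Real.dist_0_eq_abs, abs_of_nonneg (hx.1 b)]
    by_cases hic : i = c
    · rw [hic, hzc, dist_self_add_right, Real.norm_of_nonneg (hx.1 b)]
    · rw [hzi i hib hic, dist_self]
      exact hx.1 b

theorem eq_single_of_mem_stdSimplex [DecidableEq ι] (hx : x ∈ stdSimplex ℝ ι) {b : ι}
    (h : ∀ i ≠ b, x i = 0) : x = Pi.single b 1 := by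
  ext i
  by_cases hib : i = b
  · rw [hib, Pi.single_eq_same, ← hx.2, Fintype.sum_eq_single b h]
  · rw [h i hib, Pi.single_eq_of_ne hib]

/-- Two points on different facets are joined through a point of the second facet that is reached
inside the first one by moving one coordinate onto a third vertex. -/
theorem lipschitzOnWith_simplexBoundary [DecidableEq ι] {Y : Type*} [PseudoMetricSpace Y]
    {l : ℝ≥0} {h : (ι → ℝ) → Y} (hfacet : ∀ i, LipschitzOnWith l h {x ∈ stdSimplex ℝ ι | x i = 0})
    (hvertex : ∀ i j, dist (h (Pi.single i 1)) (h (Pi.single j 1)) ≤ l) :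
    LipschitzOnWith (3 * l) h (simplexBoundary ι) := by
  refine LipschitzOnWith.of_dist_le_mul ?_
  rintro x ⟨hx, a, hxa⟩ y ⟨hy, b, hyb⟩
  push_cast
  have hxy : 0 ≤ l * dist x y := by positivity
  rcases eq_or_ne a b with rfl | hab
  · linarith [(hfacet a).dist_le_mul x ⟨hx, hxa⟩ y ⟨hy, hyb⟩]
  by_cases hc : ∃ c, c ≠ a ∧ c ≠ b
  · obtain ⟨c, hca, hcb⟩ := hc
    obtain ⟨z, hz, hzb, hzi, hxz⟩ := exists_mem_stdSimplex_apply_eq_zero hx hcb.symm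
    have hxb : x b ≤ dist x y := by
      simpa [hyb, abs_of_nonneg (hx.1 b)] using dist_le_pi_dist x y b
    have hza : z a = 0 := (hzi a hab hca.symm).trans hxa
    calc dist (h x) (h y)
      _ ≤ dist (h x) (h z) + dist (h z) (h y) := dist_triangle _ _ _
      _ ≤ l * dist x z + l * dist z y :=
        add_le_add ((hfacet a).dist_le_mul x ⟨hx, hxa⟩ z ⟨hz, hza⟩)
          ((hfacet b).dist_le_mul z ⟨hz, hzb⟩ y ⟨hy, hyb⟩)
      _ ≤ l * dist x y + l * (dist x y + dist x y) := by
        gcongr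
        · exact hxz.trans hxb
        · exact (dist_triangle_left z y x).trans (add_le_add_left (hxz.trans hxb) _)
      _ = 3 * l * dist x y := by ring
  · push Not at hc
    obtain rfl := eq_single_of_mem_stdSimplex hx fun i hib ↦
      (by_contra fun hxi ↦ hib (hc i (by rintro rfl; exact hxi hxa)))
    obtain rfl := eq_single_of_mem_stdSimplex hy fun i hia ↦ hc i hia ▸ hyb
    have hone : 1 ≤ dist (Pi.single b 1 : ι → ℝ) (Pi.single a 1) := by
      simpa [hab] using dist_le_pi_dist (Pi.single b 1 : ι → ℝ) (Pi.single a 1) a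
    calc dist (h (Pi.single b 1)) (h (Pi.single a 1))
      _ ≤ l * 1 := (hvertex b a).trans_eq (mul_one _).symm
      _ ≤ l * dist (Pi.single b 1 : ι → ℝ) (Pi.single a 1) := by gcongr
      _ ≤ 3 * l * dist (Pi.single b 1 : ι → ℝ) (Pi.single a 1) := by linarith

variable [Nonempty ι]

/-- On vectors with vanishing coordinate sum, this is `1 / card ι` times the gauge of the standard
simplex seen from its barycenter. -/
def supNeg (x : ι → ℝ) : ℝ := Finset.univ.sup' Finset.univ_nonempty fun i ↦ -x i

theorem neg_apply_le_supNeg (x : ι → ℝ) (i : ι) : -x i ≤ supNeg x :=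
  Finset.le_sup' (fun i ↦ -x i) (Finset.mem_univ i)

theorem exists_supNeg_eq_neg_apply (x : ι → ℝ) : ∃ i, supNeg x = -x i := by
  obtain ⟨i, -, hi⟩ := Finset.exists_mem_eq_sup' Finset.univ_nonempty fun i ↦ -x i
  exact ⟨i, hi⟩

theorem lipschitzWith_supNeg : LipschitzWith 1 (supNeg : (ι → ℝ) → ℝ) := by
  refine LipschitzWith.of_le_add fun x y ↦ Finset.sup'_le _ _ fun i _ ↦ ?_
  have hxy := (abs_le.1 (dist_le_pi_dist x y i)).1
  linarith [neg_apply_le_supNeg y i]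

theorem norm_le_card_mul_supNeg (hx : ∑ i, x i = 0) : ‖x‖ ≤ Fintype.card ι * supNeg x := by
  have hnonneg (i : ι) : 0 ≤ x i + supNeg x := by linarith [neg_apply_le_supNeg x i]
  have hle (i : ι) : x i + supNeg x ≤ Fintype.card ι * supNeg x := by
    have := Finset.single_le_sum (fun i _ ↦ hnonneg i) (Finset.mem_univ i)
    simpa [Finset.sum_add_distrib, hx] using this
  have hpos : 0 ≤ supNeg x := by
    have hsum : (0 : ℝ) ≤ Fintype.card ι * supNeg x :=
      (hnonneg (Classical.arbitrary ι)).trans (hle _)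
    exact nonneg_of_mul_nonneg_right hsum (by positivity)
  have hcard : supNeg x ≤ Fintype.card ι * supNeg x :=
    le_mul_of_one_le_left hpos (Nat.one_le_cast.2 Fintype.card_pos)
  refine (pi_norm_le_iff_of_nonneg (by positivity)).2 fun i ↦ abs_le.2 ⟨?_, ?_⟩ <;>
    linarith [hnonneg i, hle i]

theorem supNeg_pos (hx : ∑ i, x i = 0) (hne : x ≠ 0) : 0 < supNeg x :=
  pos_of_mul_pos_right ((norm_pos_iff.2 hne).trans_le (norm_le_card_mul_supNeg hx)) (by positivity)

/-- The point where the ray with direction `x` from the barycenter leaves the standard simplex. -/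
def simplexRadialProj (x : ι → ℝ) : ι → ℝ :=
  (Fintype.card ι : ℝ)⁻¹ • (1 + (supNeg x)⁻¹ • x)

theorem simplexRadialProj_mem_simplexBoundary (hx : ∑ i, x i = 0) (hne : x ≠ 0) :
    simplexRadialProj x ∈ simplexBoundary ι := by
  have hpos := supNeg_pos hx hne
  refine ⟨⟨fun i ↦ ?_, ?_⟩, ?_⟩
  · have hi : -1 ≤ (supNeg x)⁻¹ * x i := by
      rw [inv_mul_eq_div, le_div_iff₀ hpos]
      linarith [neg_apply_le_supNeg x i]
    refine mul_nonneg (by positivity) ?_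
    simpa using neg_le_iff_add_nonneg'.1 hi
  · simp [simplexRadialProj, ← Finset.mul_sum, Finset.sum_add_distrib, hx]
  · obtain ⟨i, hi⟩ := exists_supNeg_eq_neg_apply x
    have hxi : x i ≠ 0 := fun h ↦ hpos.ne' (by rw [hi, h, neg_zero])
    exact ⟨i, by simp [simplexRadialProj, hi, hxi, inv_neg]⟩

theorem simplexRadialProj_smul_sub (hx : x ∈ simplexBoundary ι) {t : ℝ} (ht : 0 < t) :
    simplexRadialProj (t • (x - fun _ ↦ (Fintype.card ι : ℝ)⁻¹)) = x := by
  obtain ⟨hx, i, hi⟩ := hx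
  have hsup : supNeg (t • (x - fun _ ↦ (Fintype.card ι : ℝ)⁻¹)) = t * (Fintype.card ι : ℝ)⁻¹ := by
    refine le_antisymm (Finset.sup'_le _ _ fun j _ ↦ ?_) ?_
    · simpa using by nlinarith [hx.1 j]
    · exact le_of_eq_of_le (by simp [hi]) (neg_apply_le_supNeg _ i)
  ext j
  simp only [simplexRadialProj, hsup, Pi.smul_apply, Pi.add_apply, Pi.one_apply, Pi.sub_apply,
    smul_eq_mul]
  field_simp
  ring

theorem lipschitzOnWith_simplexRadialProj {δ : ℝ≥0} (hδ : 0 < δ) :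
    ∃ C, LipschitzOnWith C (simplexRadialProj : (ι → ℝ) → ι → ℝ) {x | ∑ i, x i = 0 ∧ δ ≤ ‖x‖} := by
  have hcard : (0 : ℝ≥0) < Fintype.card ι := by positivity
  have h := lipschitzOnWith_inv_smul (δ := δ / Fintype.card ι) (R := Fintype.card ι)
    (s := {x : ι → ℝ | ∑ i, x i = 0 ∧ δ ≤ ‖x‖}) (div_pos hδ hcard)
    lipschitzWith_supNeg.lipschitzOnWith LipschitzWith.id.lipschitzOnWith
    (fun x hx ↦ by
      push_cast
      exact (div_le_iff₀' (by positivity)).2 (hx.2.trans (norm_le_card_mul_supNeg hx.1)))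
    fun x hx ↦ norm_le_card_mul_supNeg hx.1
  exact ⟨_, (lipschitzWith_smul (Fintype.card ι : ℝ)⁻¹).comp_lipschitzOnWith
    ((LipschitzWith.const (1 : ι → ℝ)).lipschitzOnWith.add h)⟩

end SimplexBoundary

section Sphere

open scoped NNReal

theorem exists_continuousLinearMap_sum_eq_zero (k : ℕ) :
    ∃ (A : Euc (k + 1) →L[ℝ] Fin (k + 2) → ℝ) (B : (Fin (k + 2) → ℝ) →L[ℝ] Euc (k + 1)),
      (∀ u, ∑ i, A u i = 0) ∧ (∀ u, B (A u) = u) ∧ ∀ x, ∑ i, x i = 0 → A (B x) = x := by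
  set S : (Fin (k + 2) → ℝ) →ₗ[ℝ] ℝ := ∑ i, LinearMap.proj i with hS
  have hS_apply (x : Fin (k + 2) → ℝ) : S x = ∑ i, x i := by simp [hS]
  have hS_ne : S ≠ 0 := fun h ↦ by
    simpa [h] using hS_apply (Pi.single 0 1)
  have hrank : Module.finrank ℝ (Euc (k + 1)) = Module.finrank ℝ (LinearMap.ker S) := by
    have := Module.Dual.finrank_ker_add_one_of_ne_zero hS_ne
    rw [Module.finrank_fin_fun] at this
    rw [finrank_euclideanSpace_fin]
    omega
  let e := LinearEquiv.ofFinrankEq _ _ hrank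
  obtain ⟨B, hB⟩ := ((LinearMap.ker S).subtype ∘ₗ e.toLinearMap).exists_leftInverse_of_injective
    (LinearMap.ker_eq_bot.2 ((LinearMap.ker S).injective_subtype.comp e.injective))
  have hBA (u : Euc (k + 1)) : B (e u) = u := DFunLike.congr_fun hB u
  refine ⟨((LinearMap.ker S).subtype ∘ₗ e.toLinearMap).toContinuousLinearMap,
    B.toContinuousLinearMap, fun u ↦ ?_, hBA, fun x hx ↦ ?_⟩
  · exact hS_apply _ ▸ (e u).2
  · obtain ⟨u, hu⟩ := e.surjective ⟨x, by rw [LinearMap.mem_ker, hS_apply, hx]⟩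
    have hux : (e u : Fin (k + 2) → ℝ) = x := congrArg Subtype.val hu
    rw [← hux]
    exact congrArg (fun u ↦ (e u : Fin (k + 2) → ℝ)) (hBA u)

theorem lipschitzWith_inv_max_smul {E : Type*} [SeminormedAddCommGroup E] [NormedSpace ℝ E]
    {r : ℝ≥0} (hr : 0 < r) :
    LipschitzWith (r⁻¹ * (1 + 1 * 1)) fun x : E ↦ (max (r : ℝ) ‖x‖)⁻¹ • x :=
  lipschitzOnWith_univ.1 <| lipschitzOnWith_inv_smul hr
    (lipschitzWith_one_norm.const_max (r : ℝ)).lipschitzOnWith LipschitzWith.id.lipschitzOnWith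
    (fun x _ ↦ le_max_left _ _) fun x _ ↦ by simp

theorem inv_max_smul_mem_closedBall {E : Type*} [SeminormedAddCommGroup E] [NormedSpace ℝ E]
    {r : ℝ} (hr : 0 < r) (x : E) : (max r ‖x‖)⁻¹ • x ∈ closedBall (0 : E) 1 := by
  have hmax : 0 < max r ‖x‖ := lt_max_of_lt_left hr
  rw [mem_closedBall_zero_iff, norm_smul, Real.norm_of_nonneg (by positivity),
    inv_mul_le_iff₀ hmax, mul_one]
  exact le_max_right _ _

theorem exists_lipschitzOnWith_simplexRadialProj_comp {ι E : Type*} [Fintype ι] [Nonempty ι]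
    [NormedAddCommGroup E] [NormedSpace ℝ E] {A : E →L[ℝ] ι → ℝ} {B : (ι → ℝ) →L[ℝ] E}
    (hA : ∀ u, ∑ i, A u i = 0) (hBA : ∀ u, B (A u) = u) :
    ∃ C, LipschitzOnWith C (fun u ↦ simplexRadialProj (A u)) (sphere 0 1) := by
  obtain ⟨b, hb, hB⟩ := B.bound
  lift b to ℝ≥0 using hb.le
  obtain ⟨C, hC⟩ := lipschitzOnWith_simplexRadialProj (ι := ι) (δ := b⁻¹) (inv_pos.2 hb)
  refine ⟨_, hC.comp A.lipschitz.lipschitzOnWith fun u hu ↦ ⟨hA u, ?_⟩⟩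
  rw [NNReal.coe_inv, inv_le_iff_one_le_mul₀' hb, ← mem_sphere_zero_iff_norm.1 hu]
  simpa only [hBA] using hB (A u)

/-- Both maps are radial projections, `ψ` being extended to the whole space by truncation. -/
theorem exists_lipschitz_sphere_simplexBoundary (k : ℕ) :
    ∃ (C : ℝ≥0) (φ : Euc (k + 1) → Fin (k + 2) → ℝ) (ψ : (Fin (k + 2) → ℝ) → Euc (k + 1)),
      LipschitzOnWith C φ (sphere 0 1) ∧ LipschitzWith C ψ ∧
      MapsTo φ (sphere 0 1) (simplexBoundary (Fin (k + 2))) ∧ (∀ x, ψ x ∈ closedBall 0 1) ∧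
      ∀ x ∈ simplexBoundary (Fin (k + 2)), ψ x ∈ sphere 0 1 ∧ φ (ψ x) = x := by
  obtain ⟨A, B, hA, hBA, hAB⟩ := exists_continuousLinearMap_sum_eq_zero k
  obtain ⟨C, hC⟩ := exists_lipschitzOnWith_simplexRadialProj_comp hA hBA
  obtain ⟨a, ha, hAa⟩ := A.bound
  set c : Fin (k + 2) → ℝ := fun _ ↦ (Fintype.card (Fin (k + 2)) : ℝ)⁻¹ with hc
  let r : ℝ≥0 := (Fintype.card (Fin (k + 2)) : ℝ≥0)⁻¹ / a.toNNReal
  have hr : 0 < r := div_pos (inv_pos.2 (by simp)) (Real.toNNReal_pos.2 ha)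
  have hψ := (lipschitzWith_inv_max_smul hr).comp
    (B.lipschitz.comp (LipschitzWith.id.sub (LipschitzWith.const c)))
  refine ⟨max C _, fun u ↦ simplexRadialProj (A u), _, hC.weaken (le_max_left _ _),
    hψ.weaken (le_max_right _ _), fun u hu ↦ ?_, fun x ↦ inv_max_smul_mem_closedBall hr _,
    fun x hx ↦ ?_⟩
  · refine simplexRadialProj_mem_simplexBoundary (hA u) fun h ↦ ?_
    exact ne_zero_of_mem_unit_sphere ⟨u, hu⟩ (by simpa [h] using (hBA u).symm)
  have hABx : A (B (x - c)) = x - c := hAB _ (by simp [hc, hx.1.2, -Fintype.card_fin])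
  have hle : r ≤ ‖B (x - c)‖ := by
    obtain ⟨-, i, hi⟩ := hx
    rw [NNReal.coe_div, Real.coe_toNNReal a ha.le, div_le_iff₀' ha]
    refine le_trans ?_ (hAa _)
    rw [hABx]
    refine le_trans ?_ (norm_le_pi_norm (x - c) i)
    simp [hc, hi, -Fintype.card_fin]
  have hpos : 0 < ‖B (x - c)‖ := (NNReal.coe_pos.2 hr).trans_le hle
  simp only [Function.comp_apply, id_eq, max_eq_right hle]
  refine ⟨?_, ?_⟩
  · rw [mem_sphere_zero_iff_norm, norm_smul, norm_inv, norm_norm, inv_mul_cancel₀ hpos.ne']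
  · rw [map_smul, hABx]
    exact simplexRadialProj_smul_sub hx (inv_pos.2 hpos)

end Sphere

section SimplexExtension

open scoped NNReal

/-- Maps to `Y` from the boundary of the standard simplex with `k + 2` vertices that are
`l`-Lipschitz on the facets extend to `C * l`-Lipschitz maps. The condition on the vertices
expresses the Lipschitz bound for `k = 0`, where the facets are points. -/
def ExtendsFromSimplexBoundary (k : ℕ) (C : ℝ≥0) (Y : Type*) [PseudoMetricSpace Y] : Prop :=
  ∀ (l : ℝ≥0) (h : (Fin (k + 2) → ℝ) → Y),
    (∀ i, LipschitzOnWith l h {x ∈ stdSimplex ℝ (Fin (k + 2)) | x i = 0}) →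
    (∀ i j, dist (h (Pi.single i 1)) (h (Pi.single j 1)) ≤ l) →
    ∃ G, LipschitzWith (C * l) G ∧ EqOn G h (simplexBoundary (Fin (k + 2)))

theorem exists_extendsFromSimplexBoundary (c : ℝ) (k : ℕ) :
    ∃ C : ℝ≥0, ∀ (Y : Type) [MetricSpace Y], LipschitzConnected (k + 1) c Y →
      ExtendsFromSimplexBoundary k C Y := by
  obtain ⟨C, φ, ψ, hφ, hψ, hφmem, hψmem, hφψ⟩ := exists_lipschitz_sphere_simplexBoundary k
  refine ⟨c.toNNReal * (3 * C) * C, fun Y _ hY l h hfacet hvertex ↦ ?_⟩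
  have hhφ := (lipschitzOnWith_simplexBoundary hfacet hvertex).comp hφ hφmem
  obtain ⟨F, hF, hFh⟩ :=
    hY k k.lt_succ_self (3 * l * C : ℝ≥0) NNReal.zero_le_coe (h ∘ φ) hhφ.dist_le_mul
  refine ⟨F ∘ ψ, LipschitzWith.of_dist_le_mul fun x y ↦ ?_, fun x hx ↦ ?_⟩
  · calc dist (F (ψ x)) (F (ψ y))
      _ ≤ c * (3 * l * C : ℝ≥0) * dist (ψ x) (ψ y) := hF _ (hψmem x) _ (hψmem y)
      _ ≤ c.toNNReal * (3 * l * C : ℝ≥0) * (C * dist x y) := by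
        gcongr
        · exact Real.le_coe_toNNReal c
        · exact hψ.dist_le_mul x y
      _ = ↑(c.toNNReal * (3 * C) * C * l) * dist x y := by
        push_cast
        ring
  · obtain ⟨hx1, hxφ⟩ := hφψ x hx
    rw [Function.comp_apply, hFh _ hx1, Function.comp_apply, hxφ]

end SimplexExtension

/-! ### Extension over the skeleta -/

section FaceExtension

open scoped NNReal

variable {ι E : Type*} [Fintype ι] {P : ι → E}

theorem mem_convexHull_image_iff_exists_stdSimplex [AddCommGroup E] [Module ℝ E] {T : Set ι}
    {p : E} : p ∈ convexHull ℝ (P '' T) ↔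
      ∃ x ∈ stdSimplex ℝ ι, (∀ i ∉ T, x i = 0) ∧ Fintype.linearCombination ℝ P x = p := by
  classical
  refine ⟨fun hp ↦ ?_, ?_⟩
  · have hconvex : Convex ℝ {x ∈ stdSimplex ℝ ι | ∀ i ∉ T, x i = 0} := by
      refine (convex_stdSimplex ℝ ι).inter fun x hx y hy a b _ _ _ i hi ↦ ?_
      simp [hx i hi, hy i hi]
    obtain ⟨x, hx, rfl⟩ := convexHull_min (t := Fintype.linearCombination ℝ P ''
      {x ∈ stdSimplex ℝ ι | ∀ i ∉ T, x i = 0}) (by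
        rintro - ⟨i, hi, rfl⟩
        refine ⟨Pi.single i 1, ⟨single_mem_stdSimplex ℝ i, fun j hj ↦ ?_⟩, by simp⟩
        exact Pi.single_eq_of_ne (ne_of_mem_of_not_mem hi hj).symm 1)
      (hconvex.linear_image _) hp
    exact ⟨x, hx.1, hx.2, rfl⟩
  · rintro ⟨x, hx, hxT, rfl⟩
    have hsupp (i : ι) (hi : i ∉ Finset.univ.filter (· ∈ T)) : x i = 0 := hxT i (by simpa using hi)
    rw [Fintype.linearCombination_apply, ← Finset.sum_subset (Finset.subset_univ _)
      fun i _ hi ↦ by rw [hsupp i hi, zero_smul]]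
    refine (convex_convexHull ℝ _).sum_mem (fun i _ ↦ hx.1 i) ?_ fun i hi ↦ ?_
    · rw [Finset.sum_subset (Finset.subset_univ _) fun i _ hi ↦ hsupp i hi, hx.2]
    · exact subset_convexHull ℝ _ (mem_image_of_mem P (Finset.mem_filter.1 hi).2)

theorem dist_single_single_le_one [DecidableEq ι] (i j : ι) :
    dist (Pi.single i 1 : ι → ℝ) (Pi.single j 1) ≤ 1 := by
  refine (dist_pi_le_iff zero_le_one).2 fun a ↦ ?_
  simp only [Pi.single_apply]
  split_ifs <;> simp

theorem dist_linearCombination_le [SeminormedAddCommGroup E] [NormedSpace ℝ E] {w : E} {r : ℝ}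
    (hP : ∀ i, dist (P i) w ≤ r) {x y : ι → ℝ} (hxy : ∑ i, x i = ∑ i, y i) :
    dist (Fintype.linearCombination ℝ P x) (Fintype.linearCombination ℝ P y) ≤
      Fintype.card ι * r * dist x y := by
  have hsum : Fintype.linearCombination ℝ P x - Fintype.linearCombination ℝ P y =
      ∑ i, (x i - y i) • (P i - w) := by
    simp [Fintype.linearCombination_apply, smul_sub, sub_smul, Finset.sum_sub_distrib,
      ← Finset.sum_smul, hxy]
  rw [dist_eq_norm, hsum]
  calc ‖∑ i, (x i - y i) • (P i - w)‖
    _ ≤ ∑ i, ‖(x i - y i) • (P i - w)‖ := norm_sum_le _ _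
    _ ≤ ∑ _i : ι, dist x y * r := by
      refine Finset.sum_le_sum fun i _ ↦ ?_
      rw [norm_smul, ← dist_eq_norm, ← dist_eq_norm]
      exact mul_le_mul (dist_le_pi_dist x y i) (hP i) dist_nonneg dist_nonneg
    _ = Fintype.card ι * r * dist x y := by
      rw [Finset.sum_const, Finset.card_univ, nsmul_eq_mul]
      ring

theorem ExtendsFromSimplexBoundary.exists_extension [SeminormedAddCommGroup E] [NormedSpace ℝ E]
    {k : ℕ} {P : Fin (k + 2) → E} {Y : Type*} [PseudoMetricSpace Y] {C U V l : ℝ≥0} {G : E → Y}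
    (hY : ExtendsFromSimplexBoundary k C Y)
    (hU : LipschitzOnWith U (Fintype.linearCombination ℝ P) (stdSimplex ℝ (Fin (k + 2))))
    (hV : ∀ x ∈ stdSimplex ℝ (Fin (k + 2)), ∀ y ∈ stdSimplex ℝ (Fin (k + 2)),
      dist x y ≤ V * dist (Fintype.linearCombination ℝ P x) (Fintype.linearCombination ℝ P y))
    (hfacet : ∀ i, LipschitzOnWith l G (convexHull ℝ (P '' {i}ᶜ)))
    (hvertex : LipschitzOnWith l G (range P)) :
    ∃ G', LipschitzOnWith (C * (U * V) * l) G' (convexHull ℝ (range P)) ∧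
      ∀ i, EqOn G' G (convexHull ℝ (P '' {i}ᶜ)) := by
  set Λ := Fintype.linearCombination ℝ P with hΛ
  have hsingle (i : Fin (k + 2)) : Λ (Pi.single i 1) = P i := by simp [hΛ]
  have hmaps (i : Fin (k + 2)) : MapsTo Λ {x ∈ stdSimplex ℝ (Fin (k + 2)) | x i = 0}
      (convexHull ℝ (P '' {i}ᶜ)) := fun x hx ↦
    mem_convexHull_image_iff_exists_stdSimplex.2 ⟨x, hx.1, by simpa using hx.2, rfl⟩
  obtain ⟨F, hF, hFG⟩ := hY (l * U) (G ∘ Λ)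
    (fun i ↦ (hfacet i).comp (hU.mono (sep_subset _ _)) (hmaps i)) fun i j ↦ by
      have hΛdist := (hU.dist_le_mul _ (single_mem_stdSimplex ℝ i) _
        (single_mem_stdSimplex ℝ j)).trans
        (mul_le_of_le_one_right U.2 (dist_single_single_le_one i j))
      rw [hsingle, hsingle] at hΛdist
      rw [Function.comp_apply, Function.comp_apply, hsingle, hsingle, NNReal.coe_mul]
      exact (hvertex.dist_le_mul _ (mem_range_self i) _ (mem_range_self j)).trans (by gcongr)
  have hinj : InjOn Λ (stdSimplex ℝ (Fin (k + 2))) := fun x hx y hy hxy ↦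
    dist_le_zero.1 ((hV x hx y hy).trans_eq (by rw [hxy, dist_self, mul_zero]))
  have himage : convexHull ℝ (range P) = Λ '' stdSimplex ℝ (Fin (k + 2)) := by
    ext p
    simp [← image_univ, mem_convexHull_image_iff_exists_stdSimplex, hΛ]
  refine ⟨F ∘ Function.invFunOn Λ (stdSimplex ℝ (Fin (k + 2))), ?_, ?_⟩
  · rw [himage]
    refine LipschitzOnWith.of_dist_le_mul ?_
    rintro - ⟨x, hx, rfl⟩ - ⟨y, hy, rfl⟩
    rw [Function.comp_apply, Function.comp_apply, hinj.leftInvOn_invFunOn hx,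
      hinj.leftInvOn_invFunOn hy]
    calc dist (F x) (F y)
      _ ≤ ↑(C * (l * U)) * (V * dist (Λ x) (Λ y)) :=
        (hF.dist_le_mul x y).trans (by gcongr; exact hV x hx y hy)
      _ = ↑(C * (U * V) * l) * dist (Λ x) (Λ y) := by
        push_cast
        ring
  · intro i p hp
    obtain ⟨x, hx, hxi, rfl⟩ := mem_convexHull_image_iff_exists_stdSimplex.1 hp
    rw [Function.comp_apply, hinj.leftInvOn_invFunOn hx]
    exact hFG ⟨hx, i, hxi i (by simp)⟩

end FaceExtension

section WhitneyFaces

open scoped NNReal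

variable {m k : ℕ} {Z : Set (Euc m)} {s : Finset (Euc m)}

/-- Bound for the distortion of a linear parametrization of a `(k + 1)`-simplex of the Whitney
triangulation by the standard simplex with its sup metric. -/
def simplexDistortion (m k : ℕ) : ℝ≥0 :=
  (k + 2) * NNReal.sqrt m * (fatnessConst m).toNNReal

theorem IsWhitneyChain.dist_le_mul_dist_linearCombination {ι : Type*} [Fintype ι]
    {P : ι ↪ Euc m} {w : Euc m} (hs : IsWhitneyChain Z (Finset.univ.map P))
    (hw : IsTopVertex Z (Finset.univ.map P) w) {x y : ι → ℝ}
    (hxy : ∑ i, x i = ∑ i, y i) :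
    dist x y ≤ fatnessConst m / 2 ^ (-whitneyScale Z w) *
      dist (Fintype.linearCombination ℝ P x) (Fintype.linearCombination ℝ P y) := by
  have hfat := fatnessConst_pos m
  refine (dist_pi_le_iff (by positivity)).2 fun i ↦ ?_
  have hν (i : ι) : Function.extend P (x - y) 0 (P i) = x i - y i := P.injective.extend_apply _ _ i
  have hi := hs.abs_coeff_mul_le_fatnessConst_mul hw (ν := Function.extend P (x - y) 0)
    (by simp [Finset.sum_map, hν, hxy]) (Finset.mem_map_of_mem P (Finset.mem_univ i))
  rw [hν, Finset.sum_map] at hi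
  simp only [hν] at hi
  rwa [div_mul_eq_mul_div, le_div_iff₀ (by positivity), dist_eq_norm, dist_eq_norm, ← map_sub]

theorem exists_embedding_map_univ_eq {α : Type*} {s : Finset α} {n : ℕ} (hs : s.card = n) :
    ∃ P : Fin n ↪ α, Finset.univ.map P = s := by
  refine ⟨(s.equivFinOfCardEq hs).symm.toEmbedding.trans (Function.Embedding.subtype _), ?_⟩
  rw [← Finset.map_map, Finset.map_univ_equiv, Finset.univ_eq_attach, Finset.attach_map_val]

theorem IsWhitneyChain.exists_extension {C l : ℝ≥0} {Y : Type*} [PseudoMetricSpace Y]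
    {G : Euc m → Y} (hs : IsWhitneyChain Z s) (hcard : s.card = k + 2)
    (hY : ExtendsFromSimplexBoundary k C Y)
    (hfacet : ∀ v ∈ s, LipschitzOnWith l G (convexHull ℝ (s \ {v} : Set (Euc m))))
    (hvertex : LipschitzOnWith l G s) :
    ∃ G', LipschitzOnWith (C * simplexDistortion m k * l) G' (convexHull ℝ s) ∧
      ∀ t ⊂ s, EqOn G' G (convexHull ℝ t) := by
  obtain ⟨w, hw⟩ := hs.exists_isTopVertex (Finset.card_pos.1 (by omega))
  obtain ⟨P, rfl⟩ := exists_embedding_map_univ_eq hcard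
  have hPmem (i : Fin (k + 2)) : P i ∈ Finset.univ.map P :=
    Finset.mem_map_of_mem P (Finset.mem_univ i)
  have hrange : ((Finset.univ.map P : Finset (Euc m)) : Set (Euc m)) = range P := by simp
  have hcompl (i : Fin (k + 2)) : P '' {i}ᶜ = range P \ {P i} := by
    rw [image_compl_eq_range_sdiff_image P.injective, image_singleton]
  rw [hrange] at hvertex hfacet ⊢
  set r : ℝ≥0 := 2 ^ (-whitneyScale Z w) with hr
  have hr0 : r ≠ 0 := by positivity
  have hconst : (k + 2) * NNReal.sqrt m * r * ((fatnessConst m).toNNReal / r) =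
      simplexDistortion m k := by
    rw [simplexDistortion]
    field_simp
  have hU : LipschitzOnWith ((k + 2) * NNReal.sqrt m * r) (Fintype.linearCombination ℝ P)
      (stdSimplex ℝ (Fin (k + 2))) := LipschitzOnWith.of_dist_le_mul fun x hx y hy ↦ by
    simpa [hr, mul_assoc] using dist_linearCombination_le
      (fun i ↦ dist_le_of_mem_dyadicCell (hw.mem_cell _ (hPmem i)) (hw.mem_cell w hw.mem))
      (hx.2.trans hy.2.symm)
  have hV (x) (hx : x ∈ stdSimplex ℝ (Fin (k + 2))) (y) (hy : y ∈ stdSimplex ℝ (Fin (k + 2))) :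
      dist x y ≤ ((fatnessConst m).toNNReal / r : ℝ≥0) *
        dist (Fintype.linearCombination ℝ P x) (Fintype.linearCombination ℝ P y) := by
    simpa [hr, (fatnessConst_pos m).le] using
      hs.dist_le_mul_dist_linearCombination hw (hx.2.trans hy.2.symm)
  obtain ⟨G', hG', hG'G⟩ := hY.exists_extension hU hV
    (fun i ↦ hcompl i ▸ hfacet (P i) (hPmem i)) hvertex
  rw [hconst] at hG'
  refine ⟨G', hG', fun t ht ↦ ?_⟩
  obtain ⟨v, hv, hvt⟩ := Finset.exists_of_ssubset ht
  obtain ⟨i, -, rfl⟩ := Finset.mem_map.1 hv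
  refine (hG'G i).mono (convexHull_mono ?_)
  rw [hcompl, ← hrange]
  exact fun x hx ↦ ⟨ht.1 hx, fun h ↦ hvt (h ▸ hx)⟩

theorem IsWhitneyChain.lipschitzOnWith_nearestPoint {z : Euc m → Euc m}
    (hs : IsWhitneyChain Z s) (hz : ∀ a, dist (z a) a = infDist a Z) :
    LipschitzOnWith (2 + 16 * NNReal.sqrt m) z s := by
  have hcell {v w : Euc m} (hv : v ∈ whitneyVertices Z) (hw : w ∈ whitneyVertices Z)
      (hvw : v ∈ whitneyCell Z w) : dist (z v) (z w) ≤ (2 + 16 * √m) * dist v w := by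
    rcases eq_or_ne v w with rfl | hne
    · simp
    calc dist (z v) (z w)
      _ ≤ dist (z v) v + dist v w + dist w (z w) := dist_triangle4 _ _ _ _
      _ = infDist v Z + dist v w + infDist w Z := by rw [hz, dist_comm w, hz]
      _ ≤ 2 * dist v w + 2 * infDist w Z := by
        linarith [infDist_le_infDist_add_dist (s := Z) (x := v) (y := w)]
      _ ≤ 2 * dist v w + 2 * (4 * √m * (2 * dist v w)) := by
        have hscale := two_zpow_div_two_le_dist hv hw hvw hne
        rw [dist_comm] at hscale
        refine add_le_add_right (mul_le_mul_of_nonneg_left ?_ zero_le_two) _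
        exact (infDist_lt_of_pos hw.1).le.trans (by gcongr; linarith)
      _ = (2 + 16 * √m) * dist v w := by ring
  refine LipschitzOnWith.of_dist_le_mul fun v hv w hw ↦ ?_
  push_cast
  rcases hs.total v hv w hw with h | h
  · exact hcell (hs.mem_vertices v hv) (hs.mem_vertices w hw) h
  · rw [dist_comm, dist_comm v]
    exact hcell (hs.mem_vertices w hw) (hs.mem_vertices v hv) h

end WhitneyFaces

section Skeleton

open scoped NNReal

variable {m n : ℕ} {Z : Set (Euc m)}

theorem exists_eqOn_simplices_of_eqOn_faces {E Y : Type*} [AddCommGroup E] [Module ℝ E]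
    (K : Geometry.SimplicialComplex ℝ E) {d : ℕ} (hd : 1 < d) {G : E → Y} {H : Finset E → E → Y}
    (hH : ∀ s ∈ K.faces, s.card = d → ∀ t ⊂ s, EqOn (H s) G (convexHull ℝ t)) :
    ∃ G', (∀ s ∈ K.faces, s.card = d → EqOn G' (H s) (convexHull ℝ s)) ∧
      EqOn G' G K.vertices := by
  classical
  have hcompat : ∀ s ∈ K.faces, s.card = d → ∀ t ∈ K.faces, t.card = d →
      EqOn (H s) (H t) (convexHull ℝ s ∩ convexHull ℝ t) := by
    intro s hs hsd t ht htd x hx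
    rcases eq_or_ne s t with rfl | hst
    · rfl
    have hxst := K.inter_subset_convexHull hs ht hx
    rw [← Finset.coe_inter] at hxst
    have hs' : s ∩ t ⊂ s := Finset.inter_subset_left.ssubset_of_ne fun h ↦
      hst (Finset.eq_of_subset_of_card_le (Finset.inter_eq_left.1 h) (htd.trans hsd.symm).le)
    have ht' : s ∩ t ⊂ t := Finset.inter_subset_right.ssubset_of_ne fun h ↦
      hst (Finset.eq_of_subset_of_card_le (Finset.inter_eq_right.1 h) (hsd.trans htd.symm).le).symm
    rw [hH s hs hsd _ hs' hxst, hH t ht htd _ ht' hxst]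
  set G' : E → Y := fun x ↦
    if h : ∃ s ∈ K.faces, s.card = d ∧ x ∈ convexHull ℝ (s : Set E) then H h.choose x else G x
  have hG'H (s : Finset E) (hs : s ∈ K.faces) (hsd : s.card = d) :
      EqOn G' (H s) (convexHull ℝ s) := by
    intro x hx
    have h : ∃ s ∈ K.faces, s.card = d ∧ x ∈ convexHull ℝ (s : Set E) := ⟨s, hs, hsd, hx⟩
    obtain ⟨ht, htd, hxt⟩ := h.choose_spec
    exact (dif_pos h).trans (hcompat _ ht htd s hs hsd ⟨hxt, hx⟩)
  refine ⟨G', hG'H, fun v hv ↦ ?_⟩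
  by_cases h : ∃ s ∈ K.faces, s.card = d ∧ v ∈ convexHull ℝ (s : Set E)
  · obtain ⟨s, hs, hsd, hvs⟩ := h
    have hsv : {v} ⊂ s :=
      (Finset.singleton_subset_iff.2 ((K.vertex_mem_convexHull_iff hv hs).1 hvs)).ssubset_of_ne
        fun h ↦ by simp [← hsd, ← h] at hd
    rw [hG'H s hs hsd hvs]
    exact hH s hs hsd _ hsv (by simp)
  · exact dif_neg h

theorem LipschitzConnected.mono {n' : ℕ} {c : ℝ} {Y : Type} [MetricSpace Y]
    (hY : LipschitzConnected n' c Y) (hn : n ≤ n') : LipschitzConnected n c Y :=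
  fun k hk ↦ hY k (hk.trans_le hn)

theorem exists_extension_to_next_skeleton {C l : ℝ≥0} {Y : Type*} [PseudoMetricSpace Y]
    {G : Euc m → Y} (hY : ExtendsFromSimplexBoundary n C Y)
    (hface : ∀ s ∈ (whitneyTriangulation Z).faces, s.card = n + 1 →
      LipschitzOnWith l G (convexHull ℝ s))
    (hvertex : ∀ s ∈ (whitneyTriangulation Z).faces, LipschitzOnWith l G s) :
    ∃ G', (∀ s ∈ (whitneyTriangulation Z).faces, s.card = n + 2 →
        LipschitzOnWith (C * simplexDistortion m n * l) G' (convexHull ℝ s)) ∧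
      EqOn G' G (whitneyTriangulation Z).vertices := by
  have hext (s : Finset (Euc m)) : ∃ H : Euc m → Y, s ∈ (whitneyTriangulation Z).faces →
      s.card = n + 2 → LipschitzOnWith (C * simplexDistortion m n * l) H (convexHull ℝ s) ∧
        ∀ t ⊂ s, EqOn H G (convexHull ℝ t) := by
    by_cases hs : s ∈ (whitneyTriangulation Z).faces ∧ s.card = n + 2
    · obtain ⟨hs, hcard⟩ := hs
      have hfacet (v : Euc m) (hv : v ∈ s) :
          LipschitzOnWith l G (convexHull ℝ (s \ {v} : Set (Euc m))) := by
        have hcard' : (s.erase v).card = n + 1 := by rw [Finset.card_erase_of_mem hv, hcard]; rfl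
        rw [← Finset.coe_erase]
        exact hface _ ((whitneyTriangulation Z).down_closed hs (Finset.erase_subset v s)
          (Finset.card_pos.1 (by omega))) hcard'
      obtain ⟨H, hH⟩ := hs.2.exists_extension hcard hY hfacet (hvertex s hs)
      exact ⟨H, fun _ _ ↦ hH⟩
    · exact ⟨G, fun h hcard ↦ absurd ⟨h, hcard⟩ hs⟩
  choose H hH using hext
  obtain ⟨G', hG'H, hG'G⟩ := exists_eqOn_simplices_of_eqOn_faces (whitneyTriangulation Z)
    (by omega : 1 < n + 2) fun s hs hcard ↦ (hH s hs hcard).2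
  refine ⟨G', fun s hs hcard x hx y hy ↦ ?_, hG'G⟩
  rw [hG'H s hs hcard hx, hG'H s hs hcard hy]
  exact (hH s hs hcard).1 hx hy

theorem exists_extension_to_skeleton (m n : ℕ) (c : ℝ) :
    ∃ K : ℝ≥0, 1 ≤ K ∧ ∀ (Z : Set (Euc m)) (Y : Type) [MetricSpace Y], LipschitzConnected n c Y →
      ∀ (l : ℝ≥0) (G : Euc m → Y),
      (∀ s ∈ (whitneyTriangulation Z).faces, LipschitzOnWith l G s) →
      ∃ G', (∀ s ∈ (whitneyTriangulation Z).faces, s.card = n + 1 →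
          LipschitzOnWith (K * l) G' (convexHull ℝ s)) ∧
        EqOn G' G (whitneyTriangulation Z).vertices := by
  induction n with
  | zero =>
    refine ⟨1, le_rfl, fun Z Y _ _ l G _ ↦ ⟨G, fun s _ hcard ↦ ?_, eqOn_refl _ _⟩⟩
    obtain ⟨v, rfl⟩ := Finset.card_eq_one.1 hcard
    simp [LipschitzOnWith]
  | succ n ih =>
    obtain ⟨K, hK, ih⟩ := ih
    obtain ⟨C, hC⟩ := exists_extendsFromSimplexBoundary c n
    refine ⟨max K (C * simplexDistortion m n * K), hK.trans (le_max_left _ _),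
      fun Z Y _ hY l G hG ↦ ?_⟩
    obtain ⟨G₁, hG₁, hG₁G⟩ := ih Z Y (hY.mono n.le_succ) l G hG
    have hvertex : ∀ s ∈ (whitneyTriangulation Z).faces, LipschitzOnWith (K * l) G₁ s := by
      intro s hs v hv w hw
      have hs_vertices {v : Euc m} (hv : v ∈ s) : v ∈ (whitneyTriangulation Z).vertices :=
        (whitneyTriangulation Z).down_closed hs (Finset.singleton_subset_iff.2 hv) (by simp)
      rw [hG₁G (hs_vertices hv), hG₁G (hs_vertices hw)]
      exact (hG s hs).weaken (le_mul_of_one_le_left l.2 hK) hv hw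
    obtain ⟨G₂, hG₂, hG₂G₁⟩ := exists_extension_to_next_skeleton (hC Y hY) hG₁ hvertex
    refine ⟨G₂, fun s hs hcard ↦ (hG₂ s hs hcard).weaken ?_, hG₂G₁.trans hG₁G⟩
    rw [← mul_assoc]
    exact mul_le_mul_left (le_max_right _ _) l

theorem lipschitz_extension_to_skeleton_general (m n : ℕ) (c : ℝ) :
    ∃ Ct : ℝ, 1 ≤ Ct ∧ ∃ D₁ D₂ : ℝ, 0 < D₁ ∧ 0 < D₂ ∧
      ∀ Z : Set (Euc m), IsClosed Z → Z.Nonempty →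
        ∃ K : Geometry.SimplicialComplex ℝ (Euc m),
          WhitneyConclusions m D₁ D₂ Z K ∧
          ∀ (Y : Type) [MetricSpace Y], LipschitzConnected n c Y →
            ∀ L : ℝ, 0 ≤ L → ∀ f : Euc m → Y,
              (∀ x ∈ Z, ∀ y ∈ Z, dist (f x) (f y) ≤ L * dist x y) →
              ∃ ft : Euc m → Y,
                (∀ x ∈ Z, ft x = f x) ∧
                (∀ σ ∈ K.faces, σ.card = n + 1 →
                  ∀ x ∈ convexHull ℝ (σ : Set (Euc m)),
                    ∀ y ∈ convexHull ℝ (σ : Set (Euc m)),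
                      dist (ft x) (ft y) ≤ L * Ct * dist x y) ∧
                (∀ a : Euc m, ({a} : Finset (Euc m)) ∈ K.faces →
                  ∃ za ∈ Z, dist za a = Metric.infDist a Z ∧ ft a = f za) := by
  obtain ⟨K, hK, hext⟩ := exists_extension_to_skeleton m n c
  refine ⟨K * (2 + 16 * NNReal.sqrt m : ℝ≥0), ?_, 1 / 2,
    √m * ((m + 1) * fatnessConst m) + 1, by norm_num, by have := fatnessConst_pos m; positivity,
    fun Z hZ hne ↦ ⟨whitneyTriangulation Z, whitneyConclusions_whitneyTriangulation hZ hne,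
      fun Y _ hY L hL f hf ↦ ?_⟩⟩
  · exact_mod_cast one_le_mul hK (one_le_two.trans (le_self_add (a := (2 : ℝ≥0))))
  lift L to ℝ≥0 using hL
  choose z hzZ hz using fun a ↦ hZ.exists_infDist_eq_dist hne a
  obtain ⟨G, hG, hGz⟩ := hext Z Y hY _ (f ∘ z) fun s hs ↦
    (LipschitzOnWith.of_dist_le_mul hf).comp
      (hs.2.lipschitzOnWith_nearestPoint fun a ↦ (dist_comm _ _).trans (hz a).symm)
      fun v _ ↦ hzZ v
  classical
  refine ⟨Z.piecewise f G, fun x hx ↦ piecewise_eq_of_mem Z f G hx, fun s hs hcard x hx y hy ↦ ?_,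
    fun a ha ↦ ⟨z a, hzZ a, (dist_comm _ _).trans (hz a).symm, ?_⟩⟩
  · have hnotMem {p : Euc m} (hp : p ∈ convexHull ℝ (s : Set (Euc m))) : p ∉ Z :=
      (hZ.notMem_iff_infDist_pos hne).2 (hs.2.infDist_pos hp)
    rw [piecewise_eq_of_notMem Z f G (hnotMem hx), piecewise_eq_of_notMem Z f G (hnotMem hy)]
    refine ((hG s hs hcard).dist_le_mul x hx y hy).trans_eq ?_
    push_cast
    ring
  · have haZ : a ∉ Z := (hZ.notMem_iff_infDist_pos hne).2 (ha.2.infDist_pos (by simp))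
    rw [piecewise_eq_of_notMem Z f G haZ, hGz ha, Function.comp_apply]

end Skeleton

/-- **Lemma (Lipschitz extension to the `n`-skeleton of the Whitney triangulation).**
For `m > n ≥ 1` and `γ ≥ 1` there is `C̃ ≥ 1` depending only on `m, n, γ` such that for
every nonempty proper closed `Z ⊊ ℝ^m` there is a Whitney triangulation `Σ` of
`ℝ^m ∖ Z` such that every `L`-Lipschitz map `f : Z → Y` into a Lipschitz
`(n−1)`-connected space `Y` (with constant `γ`) extends to
`f̃ : Z ∪ Σ^{(n)} → Y` which is `LC̃`-Lipschitz on every `n`-simplex of `Σ`, and maps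
every vertex `a` of `Σ` to `f(z_a)` for some nearest point `z_a ∈ Z` to `a`. -/
theorem lipschitz_extension_to_skeleton
    (m n : ℕ) (hn : 1 ≤ n) (hmn : n < m) (c : ℝ) (hc : 1 ≤ c) :
    ∃ Ct : ℝ, 1 ≤ Ct ∧ ∃ D₁ D₂ : ℝ, 0 < D₁ ∧ 0 < D₂ ∧
      ∀ Z : Set (Euc m), IsClosed Z → Z.Nonempty → Z ≠ Set.univ →
        ∃ K : Geometry.SimplicialComplex ℝ (Euc m),
          WhitneyConclusions m D₁ D₂ Z K ∧
          ∀ (Y : Type) [MetricSpace Y], LipschitzConnected n c Y →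
            ∀ L : ℝ, 0 ≤ L → ∀ f : Euc m → Y,
              (∀ x ∈ Z, ∀ y ∈ Z, dist (f x) (f y) ≤ L * dist x y) →
              ∃ ft : Euc m → Y,
                (∀ x ∈ Z, ft x = f x) ∧
                (∀ σ ∈ K.faces, σ.card = n + 1 →
                  ∀ x ∈ convexHull ℝ (σ : Set (Euc m)),
                    ∀ y ∈ convexHull ℝ (σ : Set (Euc m)),
                      dist (ft x) (ft y) ≤ L * Ct * dist x y) ∧
                (∀ a : Euc m, ({a} : Finset (Euc m)) ∈ K.faces →
                  ∃ za ∈ Z, dist za a = Metric.infDist a Z ∧ ft a = f za) := by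
  obtain ⟨Ct, hCt, D₁, D₂, hD₁, hD₂, H⟩ := lipschitz_extension_to_skeleton_general m n c
  exact ⟨Ct, hCt, D₁, D₂, hD₁, hD₂, fun Z hZ hne _ ↦ H Z hZ hne⟩

end
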